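/- Let S be a set of 4-permutations. Then there exists a permuton μ that is not the uniform permuton and satisfies Σ_{π∈S} d(π,μ) = |S|/24, unless S is one of the following five sets: {1234,1243,2134,2143,3412,3421,4312,4321}, {1234,1432,2143,2341,3214,3412,4123,4321}, {1324,1342,2413,2431,3124,3142,4213,4231}, {1324,1423,2314,2413,3142,3241,4132,4231}, {1234,1243,1432,2134,2143,2341,3214,3412,3421,4123,4312,4321}, or the complement of one of these five sets within the set of all 24 4-permutations. -/

import Mathlib

open MeasureTheory Filter

noncomputable section

/-- A permuton: a Borel probability measure on `ℝ × ℝ` (supported on `[0,1]²`)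
with uniform marginals. -/
def IsPermuton (μ : Measure (ℝ × ℝ)) : Prop :=
  IsProbabilityMeasure μ ∧
    (∀ x x' : ℝ, 0 ≤ x → x ≤ x' → x' ≤ 1 →
      μ (Set.Icc x x' ×ˢ Set.Icc (0 : ℝ) 1) = ENNReal.ofReal (x' - x)) ∧
    (∀ y y' : ℝ, 0 ≤ y → y ≤ y' → y' ≤ 1 →
      μ (Set.Icc (0 : ℝ) 1 ×ˢ Set.Icc y y') = ENNReal.ofReal (y' - y))

/-- The uniform permuton: two-dimensional Lebesgue measure on `[0,1]²`. -/
def uniformPermuton : Measure (ℝ × ℝ) :=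
  volume.restrict (Set.Icc (0 : ℝ) 1 ×ˢ Set.Icc (0 : ℝ) 1)

/-- The support of a Borel measure: all points each of whose open neighbourhoods has
positive measure. -/
def measSupport (μ : Measure (ℝ × ℝ)) : Set (ℝ × ℝ) :=
  {p | ∀ U : Set (ℝ × ℝ), IsOpen U → p ∈ U → 0 < μ U}

/-- The pattern density of a `k`-permutation `π` in a measure `μ` on `ℝ × ℝ`:
the `μ^{⊗ k}`-probability that `k` sampled points, relabelled so that their
`x`-coordinates increase, have `y`-coordinates ordered according to `π`. -/
def PermutonDensity {k : ℕ} (π : Equiv.Perm (Fin k)) (μ : Measure (ℝ × ℝ)) : ℝ :=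
  ((Measure.pi fun _ : Fin k => μ)
    {p : Fin k → ℝ × ℝ | ∃ σ : Equiv.Perm (Fin k),
      StrictMono (fun i => (p (σ i)).1) ∧
        ∀ i j : Fin k, (p (σ i)).2 < (p (σ j)).2 ↔ π i < π j}).toReal

open scoped Classical in
/-- The pattern density of a `k`-permutation `π` in an `n`-permutation `Π`:
the proportion of `k`-element subsets of `Fin n` on which `Π` induces the pattern `π`
(zero when `n < k`). -/
def PatternDensity {k n : ℕ} (π : Equiv.Perm (Fin k)) (Perm : Equiv.Perm (Fin n)) : ℝ :=
  ((Finset.univ.filter fun A : Finset (Fin n) =>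
      ∃ h : A.card = k, ∀ i j : Fin k,
        Perm ↑(A.orderIsoOfFin h i) < Perm ↑(A.orderIsoOfFin h j) ↔ π i < π j).card : ℝ) /
    (n.choose k)

/-- A sequence of permutations (of varying orders) is quasirandom if the density of every
pattern `π` converges to `1/|π|!`. -/
def Quasirandom (P : ℕ → (n : ℕ) × Equiv.Perm (Fin n)) : Prop :=
  ∀ (k : ℕ) (π : Equiv.Perm (Fin k)),
    Tendsto (fun i => PatternDensity π (P i).2) atTop (nhds (1 / (Nat.factorial k : ℝ)))

/-- A set `S` of `k`-permutations is `Σ`-forcing if a sequence of permutations is quasirandom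
exactly when the sum of the densities of the patterns from `S` converges to `|S|/k!`. -/
def SigmaForcing {k : ℕ} (S : Finset (Equiv.Perm (Fin k))) : Prop :=
  ∀ P : ℕ → (n : ℕ) × Equiv.Perm (Fin n),
    Quasirandom P ↔
      Tendsto (fun i => ∑ π ∈ S, PatternDensity π (P i).2) atTop
        (nhds ((S.card : ℝ) / (Nat.factorial k : ℝ)))

/-- The `4`-permutation written in one-line notation as `(a+1)(b+1)(c+1)(d+1)`
(inputs are 0-indexed). -/
def mk4 (a b c d : Fin 4) (h : Function.Bijective ![a, b, c, d] := by decide) :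
    Equiv.Perm (Fin 4) :=
  Equiv.ofBijective _ h

/-- A doubly stochastic matrix: non-negative entries, all row and column sums equal to one. -/
def IsDoublyStochastic {n : ℕ} (A : Matrix (Fin n) (Fin n) ℝ) : Prop :=
  (∀ i j, 0 ≤ A i j) ∧ (∀ i, ∑ j, A i j = 1) ∧ (∀ j, ∑ i, A i j = 1)

/-- The step permuton `μ[A]` associated with an `n × n` doubly stochastic matrix `A`. -/
def stepPermuton {n : ℕ} (A : Matrix (Fin n) (Fin n) ℝ) : Measure (ℝ × ℝ) :=
  ∑ i : Fin n, ∑ j : Fin n,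
    ENNReal.ofReal (A i j * n) •
      volume.restrict
        (Set.Ico ((i : ℝ) / n) (((i : ℝ) + 1) / n) ×ˢ
          Set.Ico ((j : ℝ) / n) (((j : ℝ) + 1) / n))

/-- The matrix `B^{ij}` (0-indexed: `p, q ∈ [n-1]`): `+1` at positions `(p,q)` and
`(p+1,q+1)`, `-1` at positions `(p,q+1)` and `(p+1,q)`, `0` elsewhere. -/
def Bmat (n : ℕ) (p q : Fin (n - 1)) : Matrix (Fin n) (Fin n) ℝ := fun a b =>
  (if (a : ℕ) = (p : ℕ) ∧ (b : ℕ) = (q : ℕ) then 1 else 0) +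
    (if (a : ℕ) = (p : ℕ) + 1 ∧ (b : ℕ) = (q : ℕ) + 1 then 1 else 0) -
    (if (a : ℕ) = (p : ℕ) ∧ (b : ℕ) = (q : ℕ) + 1 then 1 else 0) -
    (if (a : ℕ) = (p : ℕ) + 1 ∧ (b : ℕ) = (q : ℕ) then 1 else 0)

/-- The matrix `A + ∑_{i,j} x_{ij} B^{ij}` where `A` is the `n × n` matrix with all
entries `1/n`. -/
def pertMatrix (n : ℕ) (x : Fin (n - 1) × Fin (n - 1) → ℝ) : Matrix (Fin n) (Fin n) ℝ :=
  fun a b => 1 / n + ∑ p : Fin (n - 1) × Fin (n - 1), x p * Bmat n p.1 p.2 a b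

/-- The function `h_{S,n}`: the sum over `π ∈ S` of the pattern density of `π` in the
step permuton of the perturbed matrix. -/
def hSN (n : ℕ) (S : Finset (Equiv.Perm (Fin 4))) (x : Fin (n - 1) × Fin (n - 1) → ℝ) : ℝ :=
  ∑ π ∈ S, PermutonDensity π (stepPermuton (pertMatrix n x))

open scoped Classical in
/-- The cover matrix of a set `S` of `4`-permutations: `C i j` is the number of `π ∈ S`
with `π j = i`. -/
def coverMatrix (S : Finset (Equiv.Perm (Fin 4))) : Fin 4 → Fin 4 → ℕ := fun i j =>
  (S.filter fun π => π j = i).card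

/-- The eight symmetry operations on `4`-permutations. -/
def symOps : List (Equiv.Perm (Fin 4) → Equiv.Perm (Fin 4)) :=
  [fun σ => σ,
   fun σ => σ * Fin.revPerm,
   fun σ => Fin.revPerm * σ,
   fun σ => Fin.revPerm * σ * Fin.revPerm,
   fun σ => σ⁻¹,
   fun σ => σ⁻¹ * Fin.revPerm,
   fun σ => Fin.revPerm * σ⁻¹,
   fun σ => Fin.revPerm * σ⁻¹ * Fin.revPerm]

open scoped Classical in
/-- `T` is symmetric to `S` if one of the eight symmetry operations maps `S` onto `T`. -/
def SymmetricSets (S T : Finset (Equiv.Perm (Fin 4))) : Prop :=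
  ∃ op ∈ symOps, T = S.image op

end

/-- Lebesgue measure on `[0,1)`. -/
noncomputable def lamU : Measure ℝ := volume.restrict (Set.Ico (0:ℝ) 1)

instance : IsProbabilityMeasure lamU := ⟨by simp [lamU]⟩

/-- Lebesgue measure on the unit square. -/
noncomputable def sqU : Measure (ℝ × ℝ) := lamU.prod lamU

instance : IsProbabilityMeasure sqU := by unfold sqU; infer_instance

/-- The measure on the unit square with density `ρ`. -/
noncomputable def permD (ρ : ℝ × ℝ → ℝ) : Measure (ℝ × ℝ) :=
  sqU.withDensity fun p => ENNReal.ofReal (ρ p)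

/-- Bounded nonnegative measurable densities with uniform marginals. -/
structure Adm (ρ : ℝ × ℝ → ℝ) : Prop where
  meas : Measurable ρ
  nonneg : ∀ p, 0 ≤ ρ p
  bdd : ∃ M, ∀ p, ρ p ≤ M
  margx : ∀ x, ∫ y, ρ (x, y) ∂lamU = 1
  margy : ∀ y, ∫ x, ρ (x, y) ∂lamU = 1

lemma Adm.integrable {ρ : ℝ × ℝ → ℝ} (h : Adm ρ) (μ : Measure (ℝ × ℝ)) [IsFiniteMeasure μ] :
    Integrable ρ μ := by
  obtain ⟨M, hM⟩ := h.bdd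
  refine Integrable.of_bound h.meas.aestronglyMeasurable M (ae_of_all _ fun p => ?_)
  rw [Real.norm_eq_abs, abs_of_nonneg (h.nonneg p)]
  exact hM p

lemma Adm.permuton {ρ : ℝ × ℝ → ℝ} (h : Adm ρ) : IsPermuton (permD ρ) := by
  have hm : Measurable fun p => ENNReal.ofReal (ρ p) := h.meas.ennreal_ofReal
  have e1 : ∀ x, ∫⁻ y, ENNReal.ofReal (ρ (x, y)) ∂lamU = 1 := by
    intro x
    rw [← ofReal_integral_eq_lintegral_ofReal, h.margx, ENNReal.ofReal_one]
    · obtain ⟨M, hM⟩ := h.bdd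
      refine Integrable.of_bound (h.meas.comp measurable_prodMk_left).aestronglyMeasurable M
        (ae_of_all _ fun p => ?_)
      rw [Real.norm_eq_abs, abs_of_nonneg (h.nonneg _)]
      exact hM _
    · exact ae_of_all _ fun _ => h.nonneg _
  have e2 : ∀ y, ∫⁻ x, ENNReal.ofReal (ρ (x, y)) ∂lamU = 1 := by
    intro x
    rw [← ofReal_integral_eq_lintegral_ofReal, h.margy, ENNReal.ofReal_one]
    · obtain ⟨M, hM⟩ := h.bdd
      refine Integrable.of_bound (h.meas.comp measurable_prodMk_right).aestronglyMeasurable M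
        (ae_of_all _ fun p => ?_)
      rw [Real.norm_eq_abs, abs_of_nonneg (h.nonneg _)]
      exact hM _
    · exact ae_of_all _ fun _ => h.nonneg _
  have hI : ∀ a b : ℝ, 0 ≤ a → b ≤ 1 → lamU (Set.Icc a b) = ENNReal.ofReal (b - a) := by
    intro a b ha hb
    rw [lamU, Measure.restrict_apply measurableSet_Icc, ← Real.volume_Icc]
    refine measure_congr ?_
    have : (Set.Ico (0:ℝ) 1 : Set ℝ) =ᵐ[volume] Set.Icc 0 1 := Ico_ae_eq_Icc
    refine ((ae_eq_refl _).inter this).trans ?_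
    rw [Set.inter_eq_left.2 (Set.Icc_subset_Icc ha hb)]
    exact ae_eq_refl _
  have hR : lamU.restrict (Set.Icc (0:ℝ) 1) = lamU := by
    rw [lamU, Measure.restrict_restrict measurableSet_Icc,
      Set.inter_eq_right.2 Set.Ico_subset_Icc_self]
  refine ⟨⟨?_⟩, ?_, ?_⟩
  · rw [permD, withDensity_apply _ MeasurableSet.univ, Measure.restrict_univ, sqU,
      lintegral_prod _ hm.aemeasurable]
    simp [e1]
  · intro x x' h0 hx h1
    rw [permD, withDensity_apply _ (measurableSet_Icc.prod measurableSet_Icc), sqU,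
      ← Measure.prod_restrict, hR, lintegral_prod _ hm.aemeasurable]
    simp [e1, hI x x' h0 h1]
  · intro x x' h0 hx h1
    rw [permD, withDensity_apply _ (measurableSet_Icc.prod measurableSet_Icc), sqU,
      ← Measure.prod_restrict, hR, lintegral_prod_symm _ hm.aemeasurable]
    simp [e2, hI x x' h0 h1]

lemma pi_permD {ρ : ℝ × ℝ → ℝ} (h : Adm ρ) :
    Measure.pi (fun _ : Fin 4 => permD ρ) =
      (Measure.pi fun _ : Fin 4 => sqU).withDensity
        fun p => ENNReal.ofReal (∏ k, ρ (p k)) := by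
  have : IsProbabilityMeasure (permD ρ) := h.permuton.1
  refine Measure.pi_eq fun s hs => ?_
  rw [withDensity_apply _ (MeasurableSet.univ_pi hs), Measure.restrict_pi_pi,
    ← ofReal_integral_eq_lintegral_ofReal]
  · rw [integral_fintype_prod_eq_prod (f := fun _ => ρ),
      ENNReal.ofReal_prod_of_nonneg fun i _ => integral_nonneg fun p => h.nonneg p]
    refine Finset.prod_congr rfl fun i _ => ?_
    rw [permD, withDensity_apply _ (hs i), ← ofReal_integral_eq_lintegral_ofReal]
    · exact h.integrable _
    · exact ae_of_all _ h.nonneg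
  · exact Integrable.fintype_prod fun i => h.integrable _
  · exact ae_of_all _ fun p => Finset.prod_nonneg fun k _ => h.nonneg _

lemma mp_comp {α : Type*} [MeasurableSpace α] (μ : Measure α) [SigmaFinite μ]
    (σ : Equiv.Perm (Fin 4)) :
    MeasurePreserving (fun p : Fin 4 → α => fun i => p (σ i))
      (Measure.pi fun _ : Fin 4 => μ) (Measure.pi fun _ : Fin 4 => μ) := by
  have := measurePreserving_piCongrLeft (fun _ : Fin 4 => μ) σ.symm
  convert this using 1
  ext p i
  obtain ⟨j, rfl⟩ := σ.symm.surjective i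
  simp only [Equiv.apply_symm_apply, MeasurableEquiv.coe_piCongrLeft]
  exact (Equiv.piCongrLeft_apply_apply (P := fun _ => α) (e := σ.symm) p j).symm

/-- Points listed in increasing order of `x` and forming the pattern `π`. -/
def EvP (π : Equiv.Perm (Fin 4)) : Set (Fin 4 → ℝ × ℝ) :=
  {p | StrictMono (fun i => (p i).1) ∧ StrictMono (fun i => (p (π.symm i)).2)}

lemma strictMono_four {α : Type*} [Preorder α] (f : Fin 4 → α) :
    StrictMono f ↔ (f 0 < f 1 ∧ f 1 < f 2 ∧ f 2 < f 3) := by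
  rw [Fin.strictMono_iff_lt_succ, Fin.forall_fin_succ, Fin.forall_fin_succ, Fin.forall_fin_succ]
  simp

lemma measurableSet_strictMono {β : Type*} [MeasurableSpace β] (f : Fin 4 → β → ℝ)
    (hf : ∀ i, Measurable (f i)) : MeasurableSet {b | StrictMono fun i => f i b} := by
  simp only [strictMono_four]
  exact (measurableSet_lt (hf 0) (hf 1)).inter
    ((measurableSet_lt (hf 1) (hf 2)).inter (measurableSet_lt (hf 2) (hf 3)))

lemma measurableSet_EvP (π : Equiv.Perm (Fin 4)) : MeasurableSet (EvP π) := by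
  refine MeasurableSet.inter ?_ ?_
  · exact measurableSet_strictMono _ fun i => (measurable_pi_apply i).fst
  · exact measurableSet_strictMono (fun i (p : Fin 4 → ℝ × ℝ) => (p (π.symm i)).2)
      fun i => (measurable_pi_apply _).snd

lemma density_eq (π : Equiv.Perm (Fin 4)) (μ : Measure (ℝ × ℝ)) [IsProbabilityMeasure μ] :
    PermutonDensity π μ = 24 * ((Measure.pi fun _ : Fin 4 => μ) (EvP π)).toReal := by
  have hset : {p : Fin 4 → ℝ × ℝ | ∃ σ : Equiv.Perm (Fin 4),
      StrictMono (fun i => (p (σ i)).1) ∧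
        ∀ i j : Fin 4, (p (σ i)).2 < (p (σ j)).2 ↔ π i < π j} =
      ⋃ σ : Equiv.Perm (Fin 4), (fun p : Fin 4 → ℝ × ℝ => fun i => p (σ i)) ⁻¹' (EvP π) := by
    ext p
    simp only [Set.mem_ofPred_eq, Set.mem_iUnion, Set.mem_preimage, EvP]
    refine exists_congr fun σ => and_congr_right fun _ => ⟨fun h i j hij => ?_, fun h i j => ?_⟩
    · rw [h]; simpa using hij
    · have := h.lt_iff_lt (a := π i) (b := π j)
      simpa using this
  rw [PermutonDensity, hset, measure_iUnion, tsum_fintype]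
  · simp_rw [(mp_comp μ _).measure_preimage (measurableSet_EvP π).nullMeasurableSet]
    simp [Fintype.card_perm, Nat.factorial]
  · intro σ τ hne
    rw [Function.onFun, Set.disjoint_left]
    rintro p ⟨h1, -⟩ ⟨h2, -⟩
    apply hne
    have h3 := Tuple.unique_monotone (f := fun i => (p i).1) (σ := σ) (τ := τ)
      h1.monotone h2.monotone
    ext i
    have hinj : Function.Injective fun i => (p i).1 := by
      intro a b hab
      have := h1.injective (a₁ := σ.symm a) (a₂ := σ.symm b) (by simpa using hab)
      simpa using this
    exact congrArg Fin.val (hinj (congrFun h3 i))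
  · intro σ
    exact (mp_comp μ σ).measurable (measurableSet_EvP π)

/-- The density functional as an integral. -/
lemma density_permD (π : Equiv.Perm (Fin 4)) {ρ : ℝ × ℝ → ℝ} (h : Adm ρ) :
    PermutonDensity π (permD ρ) =
      24 * ∫ p in EvP π, ∏ k, ρ (p k) ∂(Measure.pi fun _ : Fin 4 => sqU) := by
  have : IsProbabilityMeasure (permD ρ) := h.permuton.1
  rw [density_eq, pi_permD h, withDensity_apply _ (measurableSet_EvP π),
    ← ofReal_integral_eq_lintegral_ofReal, ENNReal.toReal_ofReal]
  · exact integral_nonneg fun p => Finset.prod_nonneg fun k _ => h.nonneg _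
  · exact (Integrable.fintype_prod (f := fun _ : Fin 4 => ρ)
      fun i => h.integrable _).integrableOn
  · exact ae_of_all _ fun p => Finset.prod_nonneg fun k _ => h.nonneg _

/-- The index of the cell of length `1/n` containing `x`. -/
noncomputable def cell (n : ℕ) [NeZero n] (x : ℝ) : Fin n := Fin.ofNat n ⌊(n : ℝ) * x⌋₊

lemma measurable_cell (n : ℕ) [NeZero n] : Measurable (cell n) :=
  measurable_from_nat.comp (Nat.measurable_floor.comp (measurable_const_mul _))

lemma cell_val (n : ℕ) [NeZero n] {x : ℝ} (h : x ∈ Set.Ico (0:ℝ) 1) :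
    (cell n x : ℕ) = ⌊(n : ℝ) * x⌋₊ := by
  have hn : (0:ℝ) < n := by exact_mod_cast Nat.pos_of_ne_zero (NeZero.ne n)
  simp only [cell, Fin.ofNat]
  apply Nat.mod_eq_of_lt
  rw [Nat.floor_lt (by have := h.1; positivity)]
  nlinarith [h.2]

lemma cell_eq_iff (n : ℕ) [NeZero n] {x : ℝ} (h : x ∈ Set.Ico (0:ℝ) 1) (i : Fin n) :
    cell n x = i ↔ x ∈ Set.Ico ((i : ℝ) / n) (((i : ℝ) + 1) / n) := by
  have hn : (0:ℝ) < n := by exact_mod_cast Nat.pos_of_ne_zero (NeZero.ne n)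
  rw [Fin.ext_iff, cell_val n h, Nat.floor_eq_iff (by have := h.1; positivity), Set.mem_Ico,
    div_le_iff₀ hn, lt_div_iff₀ hn, mul_comm x]

lemma cell_mono (n : ℕ) [NeZero n] {x y : ℝ} (hx : x ∈ Set.Ico (0:ℝ) 1)
    (hy : y ∈ Set.Ico (0:ℝ) 1) (h : x ≤ y) : cell n x ≤ cell n y := by
  rw [Fin.le_def, cell_val n hx, cell_val n hy]
  exact Nat.floor_mono (by gcongr)

lemma lamU_cell (n : ℕ) [NeZero n] (i : Fin n) :
    lamU (cell n ⁻¹' {i}) = ENNReal.ofReal (1 / n) := by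
  have hn : (0:ℝ) < n := by exact_mod_cast Nat.pos_of_ne_zero (NeZero.ne n)
  rw [lamU, Measure.restrict_apply (measurable_cell n (measurableSet_singleton i))]
  have : cell n ⁻¹' {i} ∩ Set.Ico (0:ℝ) 1 = Set.Ico ((i : ℝ) / n) (((i : ℝ) + 1) / n) := by
    ext x
    constructor
    · rintro ⟨h1, h2⟩
      exact (cell_eq_iff n h2 i).1 h1
    · intro h
      have h2 : x ∈ Set.Ico (0:ℝ) 1 := by
        refine ⟨le_trans (by positivity) h.1, lt_of_lt_of_le h.2 ?_⟩
        rw [div_le_one hn]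
        exact_mod_cast i.2
      exact ⟨(cell_eq_iff n h2 i).2 h, h2⟩
  rw [this, Real.volume_Ico]
  congr 1
  field_simp
  ring

/-- Lebesgue measure on the unit cube. -/
noncomputable def cubeU : Measure (Fin 4 → ℝ) := Measure.pi fun _ : Fin 4 => lamU

instance : IsProbabilityMeasure cubeU := by unfold cubeU; infer_instance

/-- The set of increasing quadruples with prescribed cells. -/
def incCell (n : ℕ) [NeZero n] (r : Fin 4 → Fin n) : Set (Fin 4 → ℝ) :=
  {u | StrictMono u ∧ ∀ k, cell n (u k) = r k}

lemma measurableSet_incCell (n : ℕ) [NeZero n] (r : Fin 4 → Fin n) :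
    MeasurableSet (incCell n r) := by
  refine MeasurableSet.inter ?_ ?_
  · exact measurableSet_strictMono (fun i (u : Fin 4 → ℝ) => u i) fun i => measurable_pi_apply i
  · have : {u : Fin 4 → ℝ | ∀ k, cell n (u k) = r k} =
        ⋂ k, (fun u : Fin 4 → ℝ => cell n (u k)) ⁻¹' {r k} := by ext; simp
    refine MeasurableSet.congr ?_ this.symm
    exact MeasurableSet.iInter fun k =>
      ((measurable_cell n).comp (measurable_pi_apply k)) (measurableSet_singleton _)

/-- The volume of `incCell`. -/
noncomputable def volC (n : ℕ) [NeZero n] (r : Fin 4 → Fin n) : ℝ := (cubeU (incCell n r)).toReal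

lemma ae_cube : ∀ᵐ u ∂cubeU, ∀ k, u k ∈ Set.Ico (0:ℝ) 1 := by
  rw [ae_all_iff]
  intro k
  have h : ∀ᵐ x ∂lamU, x ∈ Set.Ico (0:ℝ) 1 := ae_restrict_mem measurableSet_Ico
  exact (Measure.tendsto_eval_ae_ae (μ := fun _ : Fin 4 => lamU) (i := k)).eventually h

lemma ae_cube_inj : ∀ᵐ u ∂cubeU, Function.Injective u := by
  have hac : cubeU ≪ (volume : Measure (Fin 4 → ℝ)) := by
    have : cubeU = (volume : Measure (Fin 4 → ℝ)).restrict
        (Set.univ.pi fun _ => Set.Ico (0:ℝ) 1) := by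
      rw [volume_pi, Measure.restrict_pi_pi]; rfl
    rw [this]
    exact Measure.absolutelyContinuous_of_le Measure.restrict_le_self
  apply hac.ae_le
  have : ∀ i j : Fin 4, i ≠ j → ∀ᵐ u ∂(volume : Measure (Fin 4 → ℝ)), u i ≠ u j := by
    intro i j hij
    let l : (Fin 4 → ℝ) →ₗ[ℝ] ℝ := (LinearMap.proj (R := ℝ) (φ := fun _ : Fin 4 => ℝ) i) -
      LinearMap.proj (R := ℝ) (φ := fun _ : Fin 4 => ℝ) j
    have hne : LinearMap.ker l ≠ ⊤ := by
      intro ht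
      have : Pi.single i (1:ℝ) ∈ LinearMap.ker l := by rw [ht]; trivial
      simp [l, hij.symm] at this
    have h0 := Measure.addHaar_submodule (volume : Measure (Fin 4 → ℝ)) _ hne
    rw [ae_iff]
    convert h0 using 2
    ext u
    simp [l, sub_eq_zero]
  have h2 : ∀ᵐ u ∂(volume : Measure (Fin 4 → ℝ)), ∀ i j : Fin 4, i ≠ j → u i ≠ u j := by
    simp only [ae_all_iff]
    exact this
  filter_upwards [h2] with u hu i j hij
  by_contra hne
  exact hu i j hne hij

lemma volC_of_not_mono (n : ℕ) [NeZero n] (r : Fin 4 → Fin n) (h : ¬ Monotone r) :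
    volC n r = 0 := by
  have : cubeU (incCell n r) = 0 := by
    rw [measure_eq_zero_iff_ae_notMem]
    filter_upwards [ae_cube] with u hu hm
    apply h
    intro i j hij
    rw [← hm.2, ← hm.2]
    exact cell_mono n (hu i) (hu j) (hm.1.monotone hij)
  simp [volC, this]

/-- The number of permutations of the positions fixing `r`. -/
def stab {n : ℕ} (r : Fin 4 → Fin n) : ℕ :=
  (Finset.univ.filter fun σ : Equiv.Perm (Fin 4) => ∀ i, r (σ i) = r i).card

lemma volC_of_mono (n : ℕ) [NeZero n] (r : Fin 4 → Fin n) (h : Monotone r) :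
    stab r * volC n r = (1 / n : ℝ) ^ 4 := by
  classical
  let box : Set (Fin 4 → ℝ) := Set.univ.pi fun k => cell n ⁻¹' {r k}
  have hbox : cubeU box = ENNReal.ofReal ((1 / n : ℝ) ^ 4) := by
    simp only [box, cubeU, Measure.pi_pi, lamU_cell]
    rw [Finset.prod_const, ENNReal.ofReal_pow (by positivity)]
    rfl
  let T := Finset.univ.filter fun σ : Equiv.Perm (Fin 4) => ∀ i, r (σ i) = r i
  have hU : cubeU box =
      cubeU (⋃ σ ∈ T, (fun u : Fin 4 → ℝ => fun i => u (σ i)) ⁻¹' (incCell n r)) := by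
    apply measure_congr
    filter_upwards [ae_cube, ae_cube_inj] with u hu hinj
    apply propext
    change u ∈ box ↔ u ∈ ⋃ σ ∈ T, _
    simp only [Set.mem_iUnion, Set.mem_preimage, incCell, Set.mem_ofPred_eq, box, Set.mem_pi,
      Set.mem_univ, true_imp_iff, Set.mem_singleton_iff, exists_prop, T, Finset.mem_filter,
      Finset.mem_univ, true_and]
    constructor
    · intro hc
      have hs := Tuple.monotone_sort u
      have hss : StrictMono (u ∘ Tuple.sort u) :=
        hs.strictMono_of_injective (hinj.comp (Tuple.sort u).injective)
      have hm : Monotone (r ∘ Tuple.sort u) := by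
        intro i j hij
        simp only [Function.comp]
        rw [← hc, ← hc]
        exact cell_mono n (hu _) (hu _) (hs hij)
      have he := Tuple.unique_monotone (f := r) (σ := Tuple.sort u) (τ := 1) hm
        (by simpa using h)
      have he' : ∀ i, r (Tuple.sort u i) = r i := fun i => congrFun he i
      exact ⟨Tuple.sort u, he', hss, fun k => by rw [hc, he']⟩
    · rintro ⟨σ, h1, -, h3⟩ k
      have := h3 (σ.symm k)
      have h4 := h1 (σ.symm k)
      simp only [Equiv.apply_symm_apply] at this h4
      rw [this, h4]
  rw [measure_biUnion_finset] at hU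
  · have e : ∀ σ : Equiv.Perm (Fin 4),
        cubeU ((fun u : Fin 4 → ℝ => fun i => u (σ i)) ⁻¹' (incCell n r)) = cubeU (incCell n r) :=
      fun σ => (mp_comp lamU σ).measure_preimage (measurableSet_incCell n r).nullMeasurableSet
    simp only [e, Finset.sum_const, nsmul_eq_mul] at hU
    rw [hbox] at hU
    have := congrArg ENNReal.toReal hU
    rw [ENNReal.toReal_ofReal (by positivity), ENNReal.toReal_mul] at this
    rw [this]
    simp [stab, volC, T]
  · intro σ _ τ _ hne
    rw [Function.onFun, Set.disjoint_left]
    rintro u ⟨h1, -⟩ ⟨h2, -⟩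
    apply hne
    have h3 := Tuple.unique_monotone (f := u) (σ := σ) (τ := τ) h1.monotone h2.monotone
    have hinj : Function.Injective u := by
      intro a b hab
      have := h1.injective (a₁ := σ.symm a) (a₂ := σ.symm b) (by simpa using hab)
      simpa using this
    ext i
    exact congrArg Fin.val (hinj (congrFun h3 i))
  · intro σ _
    exact (mp_comp lamU σ).measurable (measurableSet_incCell n r)

/-- The step function on the unit square with values `B`. -/
noncomputable def stepD (n : ℕ) [NeZero n] (B : Fin n → Fin n → ℝ) : ℝ × ℝ → ℝ :=
  fun p => B (cell n p.1) (cell n p.2)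

lemma vol_cells (n : ℕ) [NeZero n] (π : Equiv.Perm (Fin 4)) (r c : Fin 4 → Fin n) :
    ((Measure.pi fun _ : Fin 4 => sqU)
      ({p | ((fun k => cell n (p k).1), (fun k => cell n (p k).2)) = (r, c)} ∩ EvP π)).toReal =
      volC n r * volC n (fun k => c (π.symm k)) := by
  have hmp := measurePreserving_arrowProdEquivProdArrow ℝ ℝ (Fin 4)
    (fun _ => lamU) (fun _ => lamU)
  have hms : MeasurableSet (incCell n r ×ˢ ((fun u : Fin 4 → ℝ => fun i => u (π.symm i)) ⁻¹'
      incCell n (fun k => c (π.symm k)))) :=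
    (measurableSet_incCell n r).prod
      ((mp_comp lamU π.symm).measurable (measurableSet_incCell n _))
  have h2 := hmp.measure_preimage hms.nullMeasurableSet
  have hset : ({p : Fin 4 → ℝ × ℝ |
      ((fun k => cell n (p k).1), (fun k => cell n (p k).2)) = (r, c)} ∩ EvP π) =
      (MeasurableEquiv.arrowProdEquivProdArrow ℝ ℝ (Fin 4)) ⁻¹'
      (incCell n r ×ˢ ((fun u : Fin 4 → ℝ => fun i => u (π.symm i)) ⁻¹'
      incCell n (fun k => c (π.symm k)))) := by
    ext p
    simp only [Set.mem_inter_iff, Set.mem_ofPred_eq, EvP, Set.mem_preimage, Set.mem_prod, incCell,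
      Prod.mk.injEq, funext_iff]
    change _ ↔ ((StrictMono (fun i => (p i).1) ∧ _) ∧
      (StrictMono (fun i => (p (π.symm i)).2) ∧ ∀ k, cell n (p (π.symm k)).2 = _))
    have : (∀ k, cell n (p (π.symm k)).2 = c (π.symm k)) ↔ ∀ k, cell n (p k).2 = c k :=
      ⟨fun h k => by simpa using h (π k), fun h k => h _⟩
    rw [this]
    constructor
    · rintro ⟨⟨a, b⟩, d, e⟩
      exact ⟨⟨d, a⟩, e, b⟩
    · rintro ⟨⟨d, a⟩, e, b⟩
      exact ⟨⟨a, b⟩, d, e⟩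
  rw [hset]
  have h3 := (mp_comp lamU π.symm).measure_preimage
    (measurableSet_incCell n (fun k => c (π.symm k))).nullMeasurableSet
  unfold sqU
  rw [h2, Measure.prod_prod, h3, ENNReal.toReal_mul]
  rfl

lemma step_density (n : ℕ) [NeZero n] (B : Fin n → Fin n → ℝ) (h : Adm (stepD n B))
    (π : Equiv.Perm (Fin 4)) :
    PermutonDensity π (permD (stepD n B)) =
      24 * ∑ r : Fin 4 → Fin n, ∑ c : Fin 4 → Fin n,
        volC n r * volC n c * ∏ k, B (r k) (c (π k)) := by
  rw [density_permD π h]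
  congr 1
  let φ : (Fin 4 → ℝ × ℝ) → (Fin 4 → Fin n) × (Fin 4 → Fin n) :=
    fun p => ((fun k => cell n (p k).1), (fun k => cell n (p k).2))
  have hφ : Measurable φ := by
    refine Measurable.prodMk ?_ ?_
    · exact measurable_pi_lambda _ fun k => (measurable_cell n).comp (measurable_pi_apply k).fst
    · exact measurable_pi_lambda _ fun k => (measurable_cell n).comp (measurable_pi_apply k).snd
  let f : (Fin 4 → Fin n) × (Fin 4 → Fin n) → ℝ := fun a => ∏ k, B (a.1 k) (a.2 k)
  have hf : ∀ p : Fin 4 → ℝ × ℝ, ∏ k, stepD n B (p k) = f (φ p) := fun p => rfl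
  simp_rw [hf]
  rw [← integral_map (φ := φ) (f := f) hφ.aemeasurable
    (measurable_of_finite f).aestronglyMeasurable]
  rw [integral_fintype (Integrable.of_finite), Fintype.sum_prod_type]
  refine Finset.sum_congr rfl fun r _ => ?_
  rw [← Equiv.sum_comp (Equiv.arrowCongr π (Equiv.refl (Fin n)))
    (fun c : Fin 4 → Fin n => volC n r * volC n c * ∏ k, B (r k) (c (π k)))]
  refine Finset.sum_congr rfl fun c _ => ?_
  rw [measureReal_def, Measure.map_apply hφ (measurableSet_singleton _),
    Measure.restrict_apply (hφ (measurableSet_singleton _))]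
  have := vol_cells n π r c
  have e : φ ⁻¹' {(r, c)} = {p : Fin 4 → ℝ × ℝ |
      ((fun k => cell n (p k).1), (fun k => cell n (p k).2)) = (r, c)} := rfl
  rw [e, this, smul_eq_mul]
  simp only [f, Equiv.arrowCongr_apply, Function.comp, Equiv.refl_apply, Equiv.symm_apply_apply]
  rfl

/-- A step density built from a matrix with row and column sums `n`. -/
lemma adm_step (n : ℕ) [NeZero n] (B : Fin n → Fin n → ℝ) (h0 : ∀ i j, 0 ≤ B i j)
    (h1 : ∀ i, ∑ j, B i j = n) (h2 : ∀ j, ∑ i, B i j = n) : Adm (stepD n B) := by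
  have hn : (n:ℝ) ≠ 0 := by exact_mod_cast NeZero.ne n
  have key : ∀ f : Fin n → ℝ, ∑ j, f j = n → ∫ x, f (cell n x) ∂lamU = 1 := by
    intro f hf
    rw [← integral_map (φ := cell n) (f := f) (measurable_cell n).aemeasurable
      (measurable_of_finite f).aestronglyMeasurable, integral_fintype (Integrable.of_finite)]
    simp_rw [measureReal_def, Measure.map_apply (measurable_cell n) (measurableSet_singleton _),
      lamU_cell, smul_eq_mul]
    rw [← Finset.mul_sum, hf, ENNReal.toReal_ofReal (by positivity)]
    field_simp
  refine ⟨?_, fun p => h0 _ _, ⟨n, fun p => ?_⟩, 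
    fun x => key (B (cell n x)) (h1 _), fun y => key (fun i => B i (cell n y)) (h2 _)⟩
  · have : Measurable (fun a : Fin n × Fin n => B a.1 a.2) := measurable_of_finite _
    exact this.comp (((measurable_cell n).comp measurable_fst).prodMk
      ((measurable_cell n).comp measurable_snd))
  · rw [← h1 (cell n p.1)]
    exact Finset.single_le_sum (f := fun j => B (cell n p.1) j) (fun j _ => h0 _ _)
      (Finset.mem_univ _)

/-- The top-left corner. -/
def cornerTL : Set (ℝ × ℝ) := Set.Ico (0:ℝ) (1/16) ×ˢ Set.Ico (15/16:ℝ) 1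

/-- The bottom-right corner. -/
def cornerBR : Set (ℝ × ℝ) := Set.Ico (15/16:ℝ) 1 ×ˢ Set.Ico (0:ℝ) (1/16)

lemma nonunif_aux {ρ : ℝ × ℝ → ℝ} {a b c d κ : ℝ} (ha : 0 ≤ a) (hab : a < b) (hb : b ≤ 1)
    (hc : 0 ≤ c) (hcd : c < d) (hd : d ≤ 1) (hκ0 : 0 ≤ κ)
    (h : ∀ p ∈ Set.Ico a b ×ˢ Set.Ico c d, ρ p = κ) (hκ : κ ≠ 1) :
    permD ρ ≠ uniformPermuton := by
  intro he
  have hQ : MeasurableSet (Set.Ico a b ×ˢ Set.Ico c d) := measurableSet_Ico.prod measurableSet_Ico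
  have h1 := congrArg (fun μ => μ (Set.Ico a b ×ˢ Set.Ico c d)) he
  have hv : (volume : Measure (ℝ × ℝ)) (Set.Ico a b ×ˢ Set.Ico c d) =
      ENNReal.ofReal ((b - a) * (d - c)) := by
    rw [Measure.volume_eq_prod, Measure.prod_prod, Real.volume_Ico, Real.volume_Ico,
      ENNReal.ofReal_mul (by linarith)]
  have hs : Set.Ico a b ×ˢ Set.Ico c d ⊆ Set.Ico (0:ℝ) 1 ×ˢ Set.Ico (0:ℝ) 1 :=
    Set.prod_mono (Set.Ico_subset_Ico ha hb) (Set.Ico_subset_Ico hc hd)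
  have hs' : Set.Ico a b ×ˢ Set.Ico c d ⊆ Set.Icc (0:ℝ) 1 ×ˢ Set.Icc (0:ℝ) 1 :=
    hs.trans (Set.prod_mono Set.Ico_subset_Icc_self Set.Ico_subset_Icc_self)
  have hsq : sqU = (volume : Measure (ℝ × ℝ)).restrict (Set.Ico (0:ℝ) 1 ×ˢ Set.Ico (0:ℝ) 1) := by
    rw [sqU, lamU, Measure.prod_restrict, Measure.volume_eq_prod]
  simp only [permD, uniformPermuton] at h1
  rw [withDensity_apply _ hQ, setLIntegral_congr_fun hQ (g := fun _ => ENNReal.ofReal κ)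
    (fun p hp => by simp only [h p hp]), setLIntegral_const, hsq, Measure.restrict_apply hQ,
    Measure.restrict_apply hQ,
    Set.inter_eq_left.2 hs, Set.inter_eq_left.2 hs', hv, ← ENNReal.ofReal_mul hκ0] at h1
  have hpos : 0 < (b - a) * (d - c) := mul_pos (by linarith) (by linarith)
  have h2 := (ENNReal.ofReal_eq_ofReal_iff (by positivity) hpos.le).1 h1
  apply hκ
  exact mul_right_cancel₀ hpos.ne' (by linarith)

/-- The deviation of the density sum from its value at the uniform permuton. -/
noncomputable def devS (S : Finset (Equiv.Perm (Fin 4))) (ρ : ℝ × ℝ → ℝ) : ℝ :=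
  ∑ π ∈ S, PermutonDensity π (permD ρ) - (S.card : ℝ) / 24

/-- The affine path between two densities. -/
def segD (ρ₀ ρ₁ : ℝ × ℝ → ℝ) (t : ℝ) : ℝ × ℝ → ℝ := fun p => (1 - t) * ρ₀ p + t * ρ₁ p

lemma adm_seg {ρ₀ ρ₁ : ℝ × ℝ → ℝ} (h₀ : Adm ρ₀) (h₁ : Adm ρ₁) {t : ℝ}
    (ht : t ∈ Set.Icc (0:ℝ) 1) : Adm (segD ρ₀ ρ₁ t) := by
  obtain ⟨M₀, hM₀⟩ := h₀.bdd
  obtain ⟨M₁, hM₁⟩ := h₁.bdd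
  have ht0 := ht.1
  have ht1 : 0 ≤ 1 - t := by linarith [ht.2]
  have ix : ∀ {ρ : ℝ × ℝ → ℝ} (_ : Adm ρ) (x : ℝ), Integrable (fun y => ρ (x, y)) lamU := by
    intro ρ h x
    obtain ⟨M, hM⟩ := h.bdd
    refine Integrable.of_bound (h.meas.comp measurable_prodMk_left).aestronglyMeasurable M
      (ae_of_all _ fun p => ?_)
    rw [Real.norm_eq_abs, abs_of_nonneg (h.nonneg _)]
    exact hM _
  have iy : ∀ {ρ : ℝ × ℝ → ℝ} (_ : Adm ρ) (y : ℝ), Integrable (fun x => ρ (x, y)) lamU := by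
    intro ρ h x
    obtain ⟨M, hM⟩ := h.bdd
    refine Integrable.of_bound (h.meas.comp measurable_prodMk_right).aestronglyMeasurable M
      (ae_of_all _ fun p => ?_)
    rw [Real.norm_eq_abs, abs_of_nonneg (h.nonneg _)]
    exact hM _
  refine ⟨(h₀.meas.const_mul _).add (h₁.meas.const_mul _), fun p => ?_,
    ⟨(1 - t) * M₀ + t * M₁, fun p => ?_⟩, fun x => ?_, fun y => ?_⟩
  · exact add_nonneg (mul_nonneg ht1 (h₀.nonneg p)) (mul_nonneg ht0 (h₁.nonneg p))
  · exact add_le_add (mul_le_mul_of_nonneg_left (hM₀ p) ht1)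
      (mul_le_mul_of_nonneg_left (hM₁ p) ht0)
  · simp only [segD]
    rw [integral_add ((ix h₀ x).const_mul _) ((ix h₁ x).const_mul _), integral_const_mul,
      integral_const_mul, h₀.margx, h₁.margx]
    ring
  · simp only [segD]
    rw [integral_add ((iy h₀ y).const_mul _) ((iy h₁ y).const_mul _), integral_const_mul,
      integral_const_mul, h₀.margy, h₁.margy]
    ring

lemma devS_cont (S : Finset (Equiv.Perm (Fin 4))) {ρ₀ ρ₁ : ℝ × ℝ → ℝ} (h₀ : Adm ρ₀)
    (h₁ : Adm ρ₁) : ContinuousOn (fun t => devS S (segD ρ₀ ρ₁ t)) (Set.Icc 0 1) := by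
  obtain ⟨M₀, hM₀⟩ := h₀.bdd
  obtain ⟨M₁, hM₁⟩ := h₁.bdd
  have hM : 0 ≤ M₀ + M₁ :=
    add_nonneg ((h₀.nonneg 0).trans (hM₀ 0)) ((h₁.nonneg 0).trans (hM₁ 0))
  have key : ContinuousOn (fun t => ∑ π ∈ S, (24 * ∫ p in EvP π, ∏ k, segD ρ₀ ρ₁ t (p k)
      ∂(Measure.pi fun _ : Fin 4 => sqU)) - (S.card : ℝ) / 24) (Set.Icc 0 1) := by
    refine ContinuousOn.sub (continuousOn_finsetSum _ fun π _ => ?_) continuousOn_const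
    refine continuousOn_const.mul ?_
    refine continuousOn_of_dominated (bound := fun _ => (M₀ + M₁) ^ 4) ?_ ?_ ?_ ?_
    · intro t ht
      have := (adm_seg h₀ h₁ ht).meas
      exact (Finset.measurable_prod _ fun k _ =>
        this.comp (measurable_pi_apply k)).aestronglyMeasurable
    · intro t ht
      refine ae_of_all _ fun p => ?_
      have ha := adm_seg h₀ h₁ ht
      rw [Real.norm_eq_abs, abs_of_nonneg (Finset.prod_nonneg fun k _ => ha.nonneg _)]
      calc ∏ k, segD ρ₀ ρ₁ t (p k) ≤ ∏ _k : Fin 4, (M₀ + M₁) := by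
            refine Finset.prod_le_prod (fun k _ => ha.nonneg _) fun k _ => ?_
            have a0 := h₀.nonneg (p k)
            have a1 := h₁.nonneg (p k)
            have b0 := hM₀ (p k)
            have b1 := hM₁ (p k)
            simp only [segD]
            nlinarith [ht.1, ht.2]
        _ = (M₀ + M₁) ^ 4 := by simp
    · exact integrable_const _
    · refine ae_of_all _ fun p => ?_
      have : Continuous fun t => ∏ k, segD ρ₀ ρ₁ t (p k) := by
        unfold segD
        fun_prop
      exact this.continuousOn
  refine key.congr fun t ht => ?_
  simp only [devS, density_permD _ (adm_seg h₀ h₁ ht)]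

/-- The hypothesis that no nonuniform permuton has zero deviation. -/
def NoZero (S : Finset (Equiv.Perm (Fin 4))) : Prop :=
  ∀ μ : Measure (ℝ × ℝ), IsPermuton μ → μ ≠ uniformPermuton →
    ∑ π ∈ S, PermutonDensity π μ ≠ (S.card : ℝ) / 24

lemma link (S : Finset (Equiv.Perm (Fin 4))) (hS : NoZero S) {ρ₀ ρ₁ : ℝ × ℝ → ℝ} (h₀ : Adm ρ₀)
    (h₁ : Adm ρ₁) (hn : ∀ t ∈ Set.Icc (0:ℝ) 1, permD (segD ρ₀ ρ₁ t) ≠ uniformPermuton) :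
    0 < devS S ρ₀ ↔ 0 < devS S ρ₁ := by
  have hz : ∀ t ∈ Set.Icc (0:ℝ) 1, devS S (segD ρ₀ ρ₁ t) ≠ 0 := by
    intro t ht h0
    exact hS _ (adm_seg h₀ h₁ ht).permuton (hn t ht) (sub_eq_zero.1 h0)
  have e0 : segD ρ₀ ρ₁ 0 = ρ₀ := by ext p; simp [segD]
  have e1 : segD ρ₀ ρ₁ 1 = ρ₁ := by ext p; simp [segD]
  have hc := devS_cont S h₀ h₁
  constructor
  · intro hp
    by_contra hneg
    have := intermediate_value_Icc' (zero_le_one' ℝ) hc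
    simp only [e0, e1] at this
    obtain ⟨t, ht, h0⟩ := this (show (0:ℝ) ∈ Set.Icc _ _ from ⟨not_lt.1 hneg, hp.le⟩)
    exact hz t ht h0
  · intro hp
    by_contra hneg
    have := intermediate_value_Icc (zero_le_one' ℝ) hc
    simp only [e0, e1] at this
    obtain ⟨t, ht, h0⟩ := this (show (0:ℝ) ∈ Set.Icc _ _ from ⟨not_lt.1 hneg, hp.le⟩)
    exact hz t ht h0

/-- `ρ` is constant on the top-left corner, with value `κ`. -/
def OnTL (ρ : ℝ × ℝ → ℝ) (κ : ℝ) : Prop := ∀ p ∈ cornerTL, ρ p = κ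
/-- `ρ` is constant on the bottom-right corner, with value `κ`. -/
def OnBR (ρ : ℝ × ℝ → ℝ) (κ : ℝ) : Prop := ∀ p ∈ cornerBR, ρ p = κ

lemma seg_ne_one {a b t : ℝ} (ht : t ∈ Set.Icc (0:ℝ) 1) (h : (a < 1 ∧ b < 1) ∨ (1 < a ∧ 1 < b)) :
    (1 - t) * a + t * b ≠ 1 := by
  have h0 := ht.1
  have h1 := ht.2
  rcases h with ⟨ha, hb⟩ | ⟨ha, hb⟩
  · apply ne_of_lt
    rcases eq_or_lt_of_le h0 with rfl | h0
    · linarith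
    · nlinarith
  · apply ne_of_gt
    rcases eq_or_lt_of_le h0 with rfl | h0
    · linarith
    · nlinarith

lemma link_TL (S : Finset (Equiv.Perm (Fin 4))) (hS : NoZero S) {ρ₀ ρ₁ : ℝ × ℝ → ℝ} (h₀ : Adm ρ₀)
    (h₁ : Adm ρ₁) {a b : ℝ} (ha : OnTL ρ₀ a) (hb : OnTL ρ₁ b)
    (h : (a < 1 ∧ b < 1) ∨ (1 < a ∧ 1 < b)) : 0 < devS S ρ₀ ↔ 0 < devS S ρ₁ := by
  refine link S hS h₀ h₁ fun t ht => ?_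
  have hmem : ((0:ℝ), (15/16:ℝ)) ∈ cornerTL := by
    constructor <;> constructor <;> norm_num
  have a0 : 0 ≤ a := by rw [← ha _ hmem]; exact h₀.nonneg _
  have b0 : 0 ≤ b := by rw [← hb _ hmem]; exact h₁.nonneg _
  refine nonunif_aux (a := 0) (b := 1/16) (c := 15/16) (d := 1) (κ := (1 - t) * a + t * b)
    le_rfl (by norm_num) (by norm_num) (by norm_num) (by norm_num) le_rfl ?_ ?_
    (seg_ne_one ht h)
  · exact add_nonneg (mul_nonneg (by linarith [ht.2]) a0) (mul_nonneg ht.1 b0)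
  · intro p hp
    rw [segD, ha p hp, hb p hp]

lemma link_BR (S : Finset (Equiv.Perm (Fin 4))) (hS : NoZero S) {ρ₀ ρ₁ : ℝ × ℝ → ℝ} (h₀ : Adm ρ₀)
    (h₁ : Adm ρ₁) {a b : ℝ} (ha : OnBR ρ₀ a) (hb : OnBR ρ₁ b)
    (h : (a < 1 ∧ b < 1) ∨ (1 < a ∧ 1 < b)) : 0 < devS S ρ₀ ↔ 0 < devS S ρ₁ := by
  refine link S hS h₀ h₁ fun t ht => ?_
  have hmem : ((15/16:ℝ), (0:ℝ)) ∈ cornerBR := by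
    constructor <;> constructor <;> norm_num
  have a0 : 0 ≤ a := by rw [← ha _ hmem]; exact h₀.nonneg _
  have b0 : 0 ≤ b := by rw [← hb _ hmem]; exact h₁.nonneg _
  refine nonunif_aux (a := 15/16) (b := 1) (c := 0) (d := 1/16) (κ := (1 - t) * a + t * b)
    (by norm_num) (by norm_num) (by norm_num) (by norm_num) (by norm_num) (by norm_num) ?_ ?_
    (seg_ne_one ht h)
  · exact add_nonneg (mul_nonneg (by linarith [ht.2]) a0) (mul_nonneg ht.1 b0)
  · intro p hp
    rw [segD, ha p hp, hb p hp]

lemma cell_first (m : ℕ) (hm : m ≤ 15) {x : ℝ} (hx : x ∈ Set.Ico (0:ℝ) (1/16)) :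
    cell (m + 1) x = 0 := by
  have h1 : (m : ℝ) ≤ 15 := by exact_mod_cast hm
  have h0 : x ∈ Set.Ico (0:ℝ) 1 := ⟨hx.1, by linarith [hx.2]⟩
  rw [cell_eq_iff _ h0]
  have hp : (0:ℝ) < ((m + 1 : ℕ) : ℝ) := by positivity
  refine ⟨?_, ?_⟩
  · simpa using hx.1
  · rw [lt_div_iff₀ hp]
    push_cast
    simp only [Fin.val_zero, Nat.cast_zero]
    nlinarith [hx.1, hx.2]

lemma cell_last (m : ℕ) (hm : m ≤ 15) {x : ℝ} (hx : x ∈ Set.Ico (15/16:ℝ) 1) :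
    cell (m + 1) x = Fin.last m := by
  have h1 : (m : ℝ) ≤ 15 := by exact_mod_cast hm
  have h0 : x ∈ Set.Ico (0:ℝ) 1 := ⟨by linarith [hx.1], hx.2⟩
  rw [cell_eq_iff _ h0]
  have hp : (0:ℝ) < ((m + 1 : ℕ) : ℝ) := by positivity
  refine ⟨?_, ?_⟩
  · rw [div_le_iff₀ hp]
    push_cast
    nlinarith [hx.1, hx.2]
  · rw [lt_div_iff₀ hp]
    push_cast
    nlinarith [hx.1, hx.2]

lemma step_TL (m : ℕ) (hm : m ≤ 15) (B : Fin (m+1) → Fin (m+1) → ℝ) :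
    OnTL (stepD (m+1) B) (B 0 (Fin.last m)) := by
  intro p hp
  rw [stepD, cell_first m hm hp.1, cell_last m hm hp.2]

lemma step_BR (m : ℕ) (hm : m ≤ 15) (B : Fin (m+1) → Fin (m+1) → ℝ) :
    OnBR (stepD (m+1) B) (B (Fin.last m) 0) := by
  intro p hp
  rw [stepD, cell_first m hm hp.2, cell_last m hm hp.1]

/-- The step values of the inflation of a permutation. -/
def permB {n : ℕ} (f : Fin n → Fin n) : Fin n → Fin n → ℝ := fun i j => if f i = j then n else 0

lemma adm_permB {n : ℕ} [NeZero n] (f : Fin n → Fin n) (hf : Function.Injective f) :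
    Adm (stepD n (permB f)) := by
  have hb : Function.Bijective f := Finite.injective_iff_bijective.1 hf
  refine adm_step n _ (fun i j => ?_) (fun i => ?_) (fun j => ?_)
  · unfold permB; positivity
  · simp [permB]
  · obtain ⟨i, rfl⟩ := hb.2 j
    simp [permB, hf.eq_iff]

lemma all_sign (S : Finset (Equiv.Perm (Fin 4))) (hS : NoZero S) :
    (∀ ρ κ, Adm ρ → OnTL ρ κ → κ ≠ 1 → 0 < devS S ρ) ∨
    (∀ ρ κ, Adm ρ → OnTL ρ κ → κ ≠ 1 → devS S ρ < 0) := by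
  have a2 : Adm (stepD 2 (permB (![0, 1] : Fin 2 → Fin 2))) := adm_permB _ (by decide)
  have a3 : Adm (stepD 3 (permB (![2, 0, 1] : Fin 3 → Fin 3))) := adm_permB _ (by decide)
  have t2 : OnTL (stepD 2 (permB (![0, 1] : Fin 2 → Fin 2))) 0 := by
    simpa [permB] using step_TL 1 (by norm_num) (permB (![0, 1] : Fin 2 → Fin 2))
  have b2 : OnBR (stepD 2 (permB (![0, 1] : Fin 2 → Fin 2))) 0 := by
    simpa [permB] using step_BR 1 (by norm_num) (permB (![0, 1] : Fin 2 → Fin 2))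
  have t3 : OnTL (stepD 3 (permB (![2, 0, 1] : Fin 3 → Fin 3))) 3 := by
    have h := step_TL 2 (by norm_num) (permB (![2, 0, 1] : Fin 3 → Fin 3))
    have e : permB (![2, 0, 1] : Fin 3 → Fin 3) 0 (Fin.last 2) = 3 := by
      rw [permB, if_pos (by decide)]; norm_num
    rwa [e] at h
  have b3 : OnBR (stepD 3 (permB (![2, 0, 1] : Fin 3 → Fin 3))) 0 := by
    have h := step_BR 2 (by norm_num) (permB (![2, 0, 1] : Fin 3 → Fin 3))
    have e : permB (![2, 0, 1] : Fin 3 → Fin 3) (Fin.last 2) 0 = 0 := by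
      rw [permB, if_neg (by decide)]
    rwa [e] at h
  have h23 := link_BR S hS a2 a3 b2 b3 (Or.inl ⟨by norm_num, by norm_num⟩)
  have key : ∀ ρ κ, Adm ρ → OnTL ρ κ → κ ≠ 1 →
      (0 < devS S (stepD 2 (permB (![0, 1] : Fin 2 → Fin 2))) ↔ 0 < devS S ρ) := by
    intro ρ κ ha ht hκ
    rcases lt_or_gt_of_ne hκ with h | h
    · exact link_TL S hS a2 ha t2 ht (Or.inl ⟨by norm_num, h⟩)
    · rw [h23]
      exact link_TL S hS a3 ha t3 ht (Or.inr ⟨by norm_num, h⟩)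
  by_cases hpos : 0 < devS S (stepD 2 (permB (![0, 1] : Fin 2 → Fin 2)))
  · exact Or.inl fun ρ κ ha ht hκ => (key ρ κ ha ht hκ).1 hpos
  · refine Or.inr fun ρ κ ha ht hκ => ?_
    have h1 : ¬ 0 < devS S ρ := fun h => hpos ((key ρ κ ha ht hκ).2 h)
    refine lt_of_le_of_ne (not_lt.1 h1) fun h0 => ?_
    have hmem : ((0:ℝ), (15/16:ℝ)) ∈ cornerTL := by
      constructor <;> constructor <;> norm_num
    have hk0 : 0 ≤ κ := by rw [← ht _ hmem]; exact ha.nonneg _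
    exact hS _ ha.permuton (nonunif_aux (a := 0) (b := 1/16) (c := 15/16) (d := 1) (κ := κ)
      le_rfl (by norm_num) (by norm_num) (by norm_num) (by norm_num) le_rfl hk0 ht hκ)
      (sub_eq_zero.1 h0)

/-- Summation over `k < n`. -/
def sumTo (g : ℕ → ℕ) (n : ℕ) : ℕ := Nat.rec 0 (fun k ih => ih + g k) n
/-- The number of rearrangements of a monotone quadruple. -/
def wt4 (a b c d : ℕ) : ℕ :=
  bif Nat.beq a b then
    (bif Nat.beq b c then (bif Nat.beq c d then 1 else 4) else (bif Nat.beq c d then 6 else 12))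
  else
    (bif Nat.beq b c then (bif Nat.beq c d then 4 else 12) else (bif Nat.beq c d then 12 else 24))

/-- The `i`-th of four numbers. -/
def pick (i a b c d : ℕ) : ℕ :=
  bif Nat.beq i 0 then a else bif Nat.beq i 1 then b else bif Nat.beq i 2 then c else d

/-- Whether the selected values increase. -/
def leafN (i0 i1 i2 i3 : ℕ) (a b c d : ℕ) : Bool :=
  Nat.ble (pick i0 a b c d) (pick i1 a b c d) && (Nat.ble (pick i1 a b c d) (pick i2 a b c d) &&
    Nat.ble (pick i2 a b c d) (pick i3 a b c d))

/-- Weighted count of occurrences of a pattern (given by its inverse) in an inflation. -/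
def cntN (l : List ℕ) (n i0 i1 i2 i3 : ℕ) : ℕ :=
  sumTo (fun d => sumTo (fun c => sumTo (fun b => sumTo (fun a =>
    bif leafN i0 i1 i2 i3 (l.getD a 0) (l.getD b 0) (l.getD c 0) (l.getD d 0)
      then wt4 a b c d ^ 2 else 0) (b+1)) (c+1)) (d+1)) n

lemma sumTo_eq (g : ℕ → ℕ) (n : ℕ) : sumTo g n = ∑ k ∈ Finset.range n, g k := by
  induction n with
  | zero => rfl
  | succ n ih =>
    rw [Finset.sum_range_succ, ← ih]
    rfl

lemma mono_four {α : Type*} [Preorder α] (f : Fin 4 → α) :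
    Monotone f ↔ (f 0 ≤ f 1 ∧ f 1 ≤ f 2 ∧ f 2 ≤ f 3) := by
  rw [Fin.monotone_iff_le_succ, Fin.forall_fin_succ, Fin.forall_fin_succ, Fin.forall_fin_succ]
  simp

lemma stab_aux : ∀ c : Fin 4 → Fin 4, c 0 = 0 → (c 1 = c 0 ∨ (c 1 : ℕ) = c 0 + 1) →
    (c 2 = c 1 ∨ (c 2 : ℕ) = c 1 + 1) → (c 3 = c 2 ∨ (c 3 : ℕ) = c 2 + 1) →
    stab c * wt4 (c 0) (c 1) (c 2) (c 3) = 24 := by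
  unfold stab
  decide +kernel

lemma stab_mul_wt {n : ℕ} (r : Fin 4 → Fin n) (h : Monotone r) :
    stab r * wt4 (r 0) (r 1) (r 2) (r 3) = 24 := by
  classical
  obtain ⟨h1, h2, h3⟩ := (mono_four r).1 h
  let b1 : Fin 4 := if r 0 = r 1 then 0 else 1
  let b2 : Fin 4 := if r 1 = r 2 then b1 else b1 + 1
  let b3 : Fin 4 := if r 2 = r 3 then b2 else b2 + 1
  let c : Fin 4 → Fin 4 := ![0, b1, b2, b3]
  have hb1 : (b1 = 0 ∧ r 0 = r 1) ∨ (b1 = 1 ∧ r 0 < r 1) := by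
    by_cases e : r 0 = r 1
    · simp [b1, e]
    · exact Or.inr ⟨by simp [b1, e], lt_of_le_of_ne h1 e⟩
  have hb2 : (b2 = b1 ∧ r 1 = r 2) ∨ (b2 = b1 + 1 ∧ r 1 < r 2) := by
    by_cases e : r 1 = r 2
    · simp [b2, e]
    · exact Or.inr ⟨by simp [b2, e], lt_of_le_of_ne h2 e⟩
  have hb3 : (b3 = b2 ∧ r 2 = r 3) ∨ (b3 = b2 + 1 ∧ r 2 < r 3) := by
    by_cases e : r 2 = r 3
    · simp [b3, e]
    · exact Or.inr ⟨by simp [b3, e], lt_of_le_of_ne h3 e⟩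
  have hc0 : c 0 = 0 := rfl
  have hc1 : c 1 = b1 := rfl
  have hc2 : c 2 = b2 := rfl
  have hc3 : c 3 = b3 := rfl
  have hiff : ∀ i j, r i = r j ↔ c i = c j := by
    intro i j
    have v1 : ((c 1 : ℕ) = 0 ∧ (r 0 : ℕ) = r 1) ∨ ((c 1 : ℕ) = 1 ∧ (r 0 : ℕ) < r 1) := by
      rw [hc1]
      rcases hb1 with ⟨e, e'⟩ | ⟨e, e'⟩
      · exact Or.inl ⟨by rw [e]; rfl, congrArg _ e'⟩
      · exact Or.inr ⟨by rw [e]; rfl, e'⟩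
    have v2 : ((c 2 : ℕ) = c 1 ∧ (r 1 : ℕ) = r 2) ∨ ((c 2 : ℕ) = c 1 + 1 ∧ (r 1 : ℕ) < r 2) := by
      rw [hc2, hc1]
      rcases hb2 with ⟨e, e'⟩ | ⟨e, e'⟩
      · exact Or.inl ⟨by rw [e], congrArg _ e'⟩
      · refine Or.inr ⟨?_, e'⟩
        rw [e]
        rcases hb1 with ⟨d, -⟩ | ⟨d, -⟩ <;> rw [d] <;> rfl
    have v3 : ((c 3 : ℕ) = c 2 ∧ (r 2 : ℕ) = r 3) ∨ ((c 3 : ℕ) = c 2 + 1 ∧ (r 2 : ℕ) < r 3) := by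
      rw [hc3, hc2]
      rcases hb3 with ⟨e, e'⟩ | ⟨e, e'⟩
      · exact Or.inl ⟨by rw [e], congrArg _ e'⟩
      · refine Or.inr ⟨?_, e'⟩
        rw [e]
        rcases hb2 with ⟨d', -⟩ | ⟨d', -⟩ <;> rcases hb1 with ⟨d, -⟩ | ⟨d, -⟩ <;>
          rw [d', d] <;> rfl
    have v0 : (c 0 : ℕ) = 0 := rfl
    rw [Fin.ext_iff, Fin.ext_iff]
    clear_value c
    fin_cases i <;> fin_cases j <;> dsimp only [Fin.reduceFinMk, Fin.mk_zero, Fin.mk_one,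
      Fin.zero_eta, Fin.isValue] <;> omega
  have hs : stab r = stab c := by
    unfold stab
    congr 1
    ext σ
    simp [hiff]
  have hw : wt4 (r 0) (r 1) (r 2) (r 3) = wt4 (c 0) (c 1) (c 2) (c 3) := by
    have e : ∀ i j, Nat.beq (r i) (r j) = Nat.beq (c i) (c j) := by
      intro i j
      rw [Bool.eq_iff_iff, Nat.beq_eq, Nat.beq_eq, ← Fin.ext_iff, ← Fin.ext_iff, hiff]
    simp only [wt4, e]
  rw [hs, hw]
  refine stab_aux c rfl ?_ ?_ ?_
  · rw [hc0, hc1]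
    rcases hb1 with ⟨e, -⟩ | ⟨e, -⟩
    · exact Or.inl e
    · right; rw [e]; rfl
  · rw [hc1, hc2]
    rcases hb2 with ⟨e, -⟩ | ⟨e, -⟩
    · exact Or.inl e
    · right; rw [e]
      rcases hb1 with ⟨e', -⟩ | ⟨e', -⟩ <;> rw [e'] <;> rfl
  · rw [hc2, hc3]
    rcases hb3 with ⟨e, -⟩ | ⟨e, -⟩
    · exact Or.inl e
    · right; rw [e]
      rcases hb2 with ⟨e', -⟩ | ⟨e', -⟩ <;> rcases hb1 with ⟨e'', -⟩ | ⟨e'', -⟩ <;>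
        rw [e', e''] <;> rfl

open scoped Classical in
lemma volC_eq (n : ℕ) [NeZero n] (r : Fin 4 → Fin n) :
    volC n r = if Monotone r then (wt4 (r 0) (r 1) (r 2) (r 3) : ℝ) / (24 * n ^ 4) else 0 := by
  have hn : (n:ℝ) ≠ 0 := by exact_mod_cast NeZero.ne n
  split_ifs with h
  · have h1 := volC_of_mono n r h
    have h2 : (stab r : ℝ) * (wt4 (r 0) (r 1) (r 2) (r 3) : ℝ) = 24 := by
      exact_mod_cast stab_mul_wt r h
    have h3 : (stab r : ℝ) ≠ 0 := by
      intro h0; rw [h0] at h2; norm_num at h2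
    apply mul_left_cancel₀ h3
    rw [h1, ← mul_div_assoc, h2]
    field_simp
  · exact volC_of_not_mono n r h

lemma stab_comp {n : ℕ} (f : Fin n → Fin n) (hf : Function.Injective f) (r : Fin 4 → Fin n)
    (π : Equiv.Perm (Fin 4)) : stab (fun k => f (r (π k))) = stab r := by
  classical
  unfold stab
  refine Finset.card_bij (fun σ _ => π * σ * π⁻¹) ?_ ?_ ?_
  · intro σ hσ
    simp only [Finset.mem_filter, Finset.mem_univ, true_and, hf.eq_iff] at hσ ⊢
    intro i
    have := hσ (π⁻¹ i)
    simpa [Equiv.Perm.mul_apply] using this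
  · intro σ _ τ _ h
    simpa using h
  · intro σ hσ
    refine ⟨π⁻¹ * σ * π, ?_, by group⟩
    simp only [Finset.mem_filter, Finset.mem_univ, true_and, hf.eq_iff] at hσ ⊢
    intro i
    simpa [Equiv.Perm.mul_apply] using hσ (π i)

open scoped Classical in
lemma perm_density (n : ℕ) [NeZero n] (f : Fin n → Fin n) (hf : Function.Injective f)
    (π : Equiv.Perm (Fin 4)) :
    PermutonDensity π (permD (stepD n (permB f))) * (24 * n ^ 4) =
      ∑ r : Fin 4 → Fin n, if Monotone r ∧ Monotone (fun k => f (r (π.symm k))) then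
        ((wt4 (r 0) (r 1) (r 2) (r 3) ^ 2 : ℕ) : ℝ) else 0 := by
  have hn : (n:ℝ) ≠ 0 := by exact_mod_cast NeZero.ne n
  rw [step_density n _ (adm_permB f hf), mul_comm, ← mul_assoc, Finset.mul_sum]
  refine Finset.sum_congr rfl fun r _ => ?_
  rw [Finset.sum_eq_single (fun k => f (r (π.symm k)))]
  · have e : ∏ k, permB f (r k) (f (r (π.symm (π k)))) = (n:ℝ) ^ 4 := by
      simp [permB]
    rw [e]
    by_cases h1 : Monotone r
    · by_cases h2 : Monotone (fun k => f (r (π.symm k)))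
      · have h3 : volC n (fun k => f (r (π.symm k))) = volC n r := by
          have a := volC_of_mono n r h1
          have b := volC_of_mono n _ h2
          rw [stab_comp f hf r π.symm, ← a] at b
          have h2 : (stab r : ℝ) * (wt4 (r 0) (r 1) (r 2) (r 3) : ℝ) = 24 := by
            exact_mod_cast stab_mul_wt r h1
          have h3 : (stab r : ℝ) ≠ 0 := by
            intro h0; rw [h0] at h2; norm_num at h2
          exact mul_left_cancel₀ h3 b
        rw [h3, volC_eq, if_pos h1, if_pos ⟨h1, h2⟩]
        push_cast
        field_simp
      · rw [if_neg (fun h => h2 h.2), volC_of_not_mono n _ h2]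
        ring
    · rw [if_neg (fun h => h1 h.1), volC_of_not_mono n _ h1]
      ring
  · intro c _ hc
    have : ∃ k, f (r k) ≠ c (π k) := by
      by_contra hcon
      push Not at hcon
      apply hc
      ext k
      rw [hcon (π.symm k), Equiv.apply_symm_apply]
    obtain ⟨k, hk⟩ := this
    have : ∏ k, permB f (r k) (c (π k)) = 0 :=
      Finset.prod_eq_zero (Finset.mem_univ k) (by simp [permB, hk])
    rw [this, mul_zero]
  · intro h
    exact absurd (Finset.mem_univ _) h

/-- Quadruples as functions, listed from the last coordinate. -/
def quadEquiv (n : ℕ) : Fin n × Fin n × Fin n × Fin n ≃ (Fin 4 → Fin n) where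
  toFun x := ![x.2.2.2, x.2.2.1, x.2.1, x.1]
  invFun r := (r 3, r 2, r 1, r 0)
  left_inv x := rfl
  right_inv r := by ext i; fin_cases i <;> rfl

lemma sum_quad {M : Type*} [AddCommMonoid M] (n : ℕ) (F : (Fin 4 → Fin n) → M) :
    ∑ r, F r = ∑ d, ∑ c, ∑ b, ∑ a, F ![a, b, c, d] := by
  rw [← Equiv.sum_comp (quadEquiv n), Fintype.sum_prod_type]
  refine Finset.sum_congr rfl fun d _ => ?_
  rw [Fintype.sum_prod_type]
  refine Finset.sum_congr rfl fun c _ => ?_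
  rw [Fintype.sum_prod_type]
  rfl

lemma sum_fin_le (n m : ℕ) (hm : m < n) (g : ℕ → ℕ) :
    ∑ a : Fin n, (if (a : ℕ) ≤ m then g a else 0) = sumTo g (m + 1) := by
  rw [sumTo_eq, Fin.sum_univ_eq_sum_range (fun a => if a ≤ m then g a else 0), ← Finset.sum_filter]
  congr 1
  ext a
  simp only [Finset.mem_filter, Finset.mem_range]
  omega

/-- Sums over monotone quadruples as nested loops. -/
lemma sum_mono_quad (n : ℕ) (G : ℕ → ℕ → ℕ → ℕ → ℕ) :
    (∑ r : Fin 4 → Fin n, if (r 0 ≤ r 1 ∧ r 1 ≤ r 2 ∧ r 2 ≤ r 3) then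
      G (r 0) (r 1) (r 2) (r 3) else 0) =
    sumTo (fun d => sumTo (fun c => sumTo (fun b => sumTo (fun a => G a b c d) (b+1)) (c+1)) (d+1))
      n := by
  rw [sum_quad, sumTo_eq, ← Fin.sum_univ_eq_sum_range]
  refine Finset.sum_congr rfl fun d _ => ?_
  rw [← sum_fin_le n d d.2]
  refine Finset.sum_congr rfl fun c _ => ?_
  split_ifs with hc
  · rw [← sum_fin_le n c c.2]
    refine Finset.sum_congr rfl fun b _ => ?_
    split_ifs with hb
    · rw [← sum_fin_le n b b.2]
      refine Finset.sum_congr rfl fun a _ => ?_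
      refine if_congr ?_ rfl rfl
      change (a ≤ b ∧ b ≤ c ∧ c ≤ d) ↔ _
      rw [Fin.le_def, Fin.le_def, Fin.le_def]
      tauto
    · refine Finset.sum_eq_zero fun a _ => if_neg ?_
      change ¬ (a ≤ b ∧ b ≤ c ∧ c ≤ d)
      rw [Fin.le_def, Fin.le_def, Fin.le_def]
      tauto
  · refine Finset.sum_eq_zero fun b _ => Finset.sum_eq_zero fun a _ => if_neg ?_
    change ¬ (a ≤ b ∧ b ≤ c ∧ c ≤ d)
    rw [Fin.le_def, Fin.le_def, Fin.le_def]
    tauto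

lemma pick_eq {n : ℕ} (g : Fin 4 → Fin n) (i : Fin 4) :
    pick (i : ℕ) (g 0) (g 1) (g 2) (g 3) = g i := by
  fin_cases i <;> rfl

lemma perm_density_cnt (n : ℕ) [NeZero n] (f : Fin n → Fin n) (hf : Function.Injective f)
    (l : List ℕ) (hl : ∀ i : Fin n, l.getD i 0 = f i) (π : Equiv.Perm (Fin 4)) :
    PermutonDensity π (permD (stepD n (permB f))) * (24 * n ^ 4) =
      (cntN l n (π.symm 0 : Fin 4) (π.symm 1 : Fin 4) (π.symm 2 : Fin 4) (π.symm 3 : Fin 4) : ℕ) := by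
  rw [perm_density n f hf π, cntN, ← sum_mono_quad]
  push_cast
  refine Finset.sum_congr rfl fun r _ => ?_
  have h1 : Monotone r ↔ (r 0 ≤ r 1 ∧ r 1 ≤ r 2 ∧ r 2 ≤ r 3) := mono_four r
  have h2 : Monotone (fun k => f (r (π.symm k))) ↔
      leafN (π.symm 0 : Fin 4) (π.symm 1 : Fin 4) (π.symm 2 : Fin 4) (π.symm 3 : Fin 4)
        (l.getD (r 0) 0) (l.getD (r 1) 0) (l.getD (r 2) 0) (l.getD (r 3) 0) = true := by
    rw [mono_four, leafN]
    simp only [hl]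
    simp only [pick_eq (fun k => f (r k)), Bool.and_eq_true, Nat.ble_eq, Fin.le_def]
  by_cases a : (r 0 ≤ r 1 ∧ r 1 ≤ r 2 ∧ r 2 ≤ r 3)
  · by_cases b : Monotone (fun k => f (r (π.symm k)))
    · rw [if_pos ⟨h1.2 a, b⟩, if_pos a, h2.1 b]
      simp
    · rw [if_neg (fun h => b h.2), if_pos a, Bool.eq_false_iff.2 (fun h => b (h2.2 h))]
      simp
  · rw [if_neg (fun h => a (h1.1 h.1)), if_neg a]

/-- The function described by a list. -/
def listF (n : ℕ) [NeZero n] (l : List ℕ) : Fin n → Fin n := fun i => Fin.ofNat n (l.getD i 0)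

/-- `24 · 256` times the probability data of order statistics of four points in four cells. -/
def Wtab (k i : Fin 4) : ℕ :=
  ![![175, 65, 15, 1], ![67, 109, 67, 13], ![13, 67, 109, 67], ![1, 15, 65, 175]] k i

lemma Wtab_sum (k i : Fin 4) :
    ∑ r : Fin 4 → Fin 4, (if r k = i then volC 4 r else 0) = (Wtab k i : ℝ) / 6144 := by
  have h : (∑ r : Fin 4 → Fin 4, if (r 0 ≤ r 1 ∧ r 1 ≤ r 2 ∧ r 2 ≤ r 3) then
      (fun a b c d => bif Nat.beq (pick k a b c d) i then wt4 a b c d else 0)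
        (r 0 : ℕ) (r 1 : ℕ) (r 2 : ℕ) (r 3 : ℕ) else 0) = Wtab k i := by
    rw [sum_mono_quad 4 (fun a b c d => bif Nat.beq (pick k a b c d) i then wt4 a b c d else 0)]
    revert k i
    decide +kernel
  rw [← h]
  push_cast
  rw [Finset.sum_div]
  refine Finset.sum_congr rfl fun r _ => ?_
  have h1 : Monotone r ↔ (r 0 ≤ r 1 ∧ r 1 ≤ r 2 ∧ r 2 ≤ r 3) := mono_four r
  have h2 : Nat.beq (pick k (r 0) (r 1) (r 2) (r 3)) i = true ↔ r k = i := by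
    rw [pick_eq r, Nat.beq_eq, Fin.ext_iff]
  rw [volC_eq]
  by_cases a : (r 0 ≤ r 1 ∧ r 1 ≤ r 2 ∧ r 2 ≤ r 3)
  · rw [if_pos (h1.2 a), if_pos a]
    by_cases b : r k = i
    · rw [if_pos b, h2.2 b]; norm_num
    · rw [if_neg b, Bool.eq_false_iff.2 (fun h => b (h2.1 h))]; norm_num
  · rw [if_neg (fun h => a (h1.1 h)), if_neg a]; simp

/-- The first-order coefficients. -/
noncomputable def Gco (g : Fin 4 → ℝ) (k : Fin 4) : ℝ := ∑ i, (Wtab k i : ℝ) / 6144 * g i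

lemma Gco_eq (g : Fin 4 → ℝ) (k : Fin 4) :
    ∑ r : Fin 4 → Fin 4, volC 4 r * g (r k) = Gco g k := by
  unfold Gco
  simp_rw [← Wtab_sum, Finset.sum_mul]
  rw [Finset.sum_comm]
  refine Finset.sum_congr rfl fun r _ => ?_
  simp [ite_mul]

lemma volC_total : ∑ r : Fin 4 → Fin 4, volC 4 r = 1 / 24 := by
  have := Gco_eq (fun _ => 1) 0
  simp only [mul_one] at this
  rw [this, Gco]
  simp [Fin.sum_univ_four, Wtab]
  norm_num

/-- The first-order perturbation. -/
def pertB (g h : Fin 4 → ℝ) (t : ℝ) : Fin 4 → Fin 4 → ℝ := fun i j => 1 + t * (g i * h j)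

/-- The polynomial giving the sum of densities. -/
noncomputable def pertF (S : Finset (Equiv.Perm (Fin 4))) (g h : Fin 4 → ℝ) (t : ℝ) : ℝ :=
  ∑ π ∈ S, 24 * ∑ r : Fin 4 → Fin 4, ∑ c : Fin 4 → Fin 4,
        volC 4 r * volC 4 c * ∏ k, pertB g h t (r k) (c (π k))

lemma pertF_zero (S : Finset (Equiv.Perm (Fin 4))) (g h : Fin 4 → ℝ) :
    pertF S g h 0 = S.card / 24 := by
  unfold pertF pertB
  simp only [zero_mul, add_zero, Finset.prod_const_one, mul_one]
  simp_rw [← Finset.mul_sum, volC_total, ← Finset.sum_mul, volC_total]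
  simp
  ring

lemma prod_deriv (a : Fin 4 → ℝ) : HasDerivAt (fun t : ℝ => ∏ k, (1 + t * a k)) (∑ k, a k) 0 := by
  have h : ∀ k, HasDerivAt (fun t : ℝ => 1 + t * a k) (a k) 0 := fun k => by
    simpa using ((hasDerivAt_id (0:ℝ)).mul_const (a k)).const_add 1
  have := HasDerivAt.fun_finsetProd (u := Finset.univ) (fun k _ => h k)
  simpa using this

lemma pertF_deriv (S : Finset (Equiv.Perm (Fin 4))) (g h : Fin 4 → ℝ) :
    HasDerivAt (pertF S g h) (24 * ∑ π ∈ S, ∑ k, Gco g k * Gco h (π k)) 0 := by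
  have key : ∀ π ∈ S, HasDerivAt (fun t => 24 * ∑ r : Fin 4 → Fin 4, ∑ c : Fin 4 → Fin 4,
        volC 4 r * volC 4 c * ∏ k, pertB g h t (r k) (c (π k)))
        (24 * ∑ r : Fin 4 → Fin 4, ∑ c : Fin 4 → Fin 4,
        volC 4 r * volC 4 c * ∑ k, g (r k) * h (c (π k))) 0 := by
    intro π _
    refine HasDerivAt.const_mul _ (HasDerivAt.fun_sum fun r _ => HasDerivAt.fun_sum fun c _ =>
      HasDerivAt.const_mul _ ?_)
    exact prod_deriv (fun k => g (r k) * h (c (π k)))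
  have := HasDerivAt.fun_sum key
  refine HasDerivAt.congr_deriv this (Eq.symm ?_)
  rw [Finset.mul_sum]
  refine Finset.sum_congr rfl fun π _ => ?_
  congr 1
  simp_rw [Finset.mul_sum]
  have : ∀ r : Fin 4 → Fin 4, ∑ c : Fin 4 → Fin 4, ∑ k,
      volC 4 r * volC 4 c * (g (r k) * h (c (π k))) =
      ∑ k, (volC 4 r * g (r k)) * Gco h (π k) := by
    intro r
    rw [Finset.sum_comm]
    refine Finset.sum_congr rfl fun k _ => ?_
    rw [← Gco_eq, Finset.mul_sum]
    refine Finset.sum_congr rfl fun c _ => by ring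
  simp_rw [this]
  rw [Finset.sum_comm]
  refine Finset.sum_congr rfl fun k _ => ?_
  rw [← Gco_eq g, Finset.sum_mul]

lemma pert_adm (g h : Fin 4 → ℝ) (hg : ∑ i, g i = 0) (hh : ∑ i, h i = 0) (g1 : ∀ i, |g i| ≤ 1)
    (h1 : ∀ i, |h i| ≤ 1) (t : ℝ) (ht : |t| ≤ 1) : Adm (stepD 4 (pertB g h t)) := by
  refine adm_step 4 _ ?_ ?_ ?_
  · intro i j
    have : |t * (g i * h j)| ≤ 1 := by
      rw [abs_mul, abs_mul]
      exact mul_le_one₀ ht (by positivity) (mul_le_one₀ (g1 i) (by positivity) (h1 j))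
    have := neg_le_of_abs_le this
    unfold pertB; linarith
  · intro i
    simp only [pertB, Finset.sum_add_distrib, ← Finset.mul_sum, hh]
    simp
  · intro j
    simp only [pertB, Finset.sum_add_distrib, ← Finset.mul_sum, ← Finset.sum_mul, hg]
    simp

lemma first_order (S : Finset (Equiv.Perm (Fin 4))) (hS : NoZero S) (g h : Fin 4 → ℝ)
    (hg : ∑ i, g i = 0) (hh : ∑ i, h i = 0) (g1 : ∀ i, |g i| ≤ 1)
    (h1 : ∀ i, |h i| ≤ 1) (g0 : g 0 ≠ 0) (h3 : h 3 ≠ 0) :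
    ∑ π ∈ S, ∑ k, Gco g k * Gco h (π k) = 0 := by
  have hd := pertF_deriv S g h
  have ev : ∀ t : ℝ, |t| ≤ 1 → devS S (stepD 4 (pertB g h t)) = pertF S g h t - pertF S g h 0 := by
    intro t ht
    rw [pertF_zero, devS, pertF]
    congr 1
    exact Finset.sum_congr rfl fun π _ => step_density 4 _ (pert_adm g h hg hh g1 h1 t ht) π
  have kap : ∀ t : ℝ, t ≠ 0 → pertB g h t 0 (Fin.last 3) ≠ 1 := by
    intro t ht
    unfold pertB
    intro e
    have : t * (g 0 * h 3) = 0 := by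
      have : Fin.last 3 = (3 : Fin 4) := rfl
      rw [this] at e
      linarith
    simp [ht, g0, h3] at this
  have nb : ∀ᶠ t : ℝ in nhds 0, |t| ≤ 1 := by
    filter_upwards [Metric.closedBall_mem_nhds (0:ℝ) one_pos] with t ht
    simpa using ht
  have hz : 24 * ∑ π ∈ S, ∑ k, Gco g k * Gco h (π k) = 0 := by
    rcases all_sign S hS with H | H
    · refine IsLocalMin.hasDerivAt_eq_zero ?_ hd
      filter_upwards [nb] with t ht
      rcases eq_or_ne t 0 with rfl | h0
      · rfl
      have := H _ _ (pert_adm g h hg hh g1 h1 t ht) (step_TL 3 (by norm_num) _) (kap t h0)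
      rw [ev t ht] at this
      linarith
    · refine IsLocalMax.hasDerivAt_eq_zero ?_ hd
      filter_upwards [nb] with t ht
      rcases eq_or_ne t 0 with rfl | h0
      · rfl
      have := H _ _ (pert_adm g h hg hh g1 h1 t ht) (step_TL 3 (by norm_num) _) (kap t h0)
      rw [ev t ht] at this
      linarith
  linarith

/-- Number of members of `S` sending `k` to `l`. -/
def cov (S : Finset (Equiv.Perm (Fin 4))) (k l : Fin 4) : ℕ := (S.filter fun π => π k = l).card

lemma cov_bilin (S : Finset (Equiv.Perm (Fin 4))) (a b : Fin 4 → ℝ) :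
    ∑ π ∈ S, ∑ k, a k * b (π k) = ∑ k, ∑ l, cov S k l * (a k * b l) := by
  rw [Finset.sum_comm]
  refine Finset.sum_congr rfl fun k _ => ?_
  simp only [cov, Finset.card_filter, Nat.cast_sum, Finset.sum_mul]
  rw [Finset.sum_comm]
  refine Finset.sum_congr rfl fun π _ => ?_
  simp

lemma cov_row (S : Finset (Equiv.Perm (Fin 4))) (k : Fin 4) : ∑ l, cov S k l = S.card := by
  simp only [cov, Finset.card_filter]
  rw [Finset.sum_comm, Finset.card_eq_sum_ones]
  refine Finset.sum_congr rfl fun π _ => ?_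
  simp

lemma cov_col (S : Finset (Equiv.Perm (Fin 4))) (l : Fin 4) : ∑ k, cov S k l = S.card := by
  simp only [cov, Finset.card_filter]
  rw [Finset.sum_comm, Finset.card_eq_sum_ones]
  refine Finset.sum_congr rfl fun π _ => ?_
  rw [Finset.sum_eq_single (π.symm l)]
  · simp
  · intro b _ hb
    rw [if_neg]
    intro e; apply hb; rw [← e]; simp
  · simp

/-- Test vectors. -/
def gv : Fin 3 → Fin 4 → ℝ := ![![1, -1, 0, 0], ![1, 0, -1, 0], ![1, 0, 0, -1]]
def hv : Fin 3 → Fin 4 → ℝ := ![![0, 0, -1, 1], ![0, -1, 0, 1], ![-1, 0, 0, 1]]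

lemma gco_gv (a : Fin 3) (k : Fin 4) : Gco (gv a) k * 6144 =
    ![![110, -42, -54, -14], ![160, 0, -96, -64], ![174, 54, -54, -174]] a k := by
  fin_cases a <;> fin_cases k <;> simp [Gco, gv, Wtab, Fin.sum_univ_four] <;> norm_num

lemma gco_hv (a : Fin 3) (k : Fin 4) : Gco (hv a) k * 6144 =
    ![![-14, -54, -42, 110], ![-64, -96, 0, 160], ![-174, -54, 54, 174]] a k := by
  fin_cases a <;> fin_cases k <;> simp [Gco, hv, Wtab, Fin.sum_univ_four] <;> norm_num

lemma bilin_gh (S : Finset (Equiv.Perm (Fin 4))) (hS : NoZero S) (a b : Fin 3) :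
    ∑ k, ∑ l, (cov S k l : ℝ) * ((Gco (gv a) k * 6144) * (Gco (hv b) l * 6144)) = 0 := by
  have h := first_order S hS (gv a) (hv b)
    (by fin_cases a <;> simp [gv, Fin.sum_univ_four])
    (by fin_cases b <;> simp [hv, Fin.sum_univ_four])
    (by intro i; fin_cases a <;> fin_cases i <;> simp [gv])
    (by intro i; fin_cases b <;> fin_cases i <;> simp [hv])
    (by fin_cases a <;> simp [gv]) (by fin_cases b <;> simp [hv])
  rw [cov_bilin] at h
  have : ∑ k, ∑ l, (cov S k l : ℝ) * ((Gco (gv a) k * 6144) * (Gco (hv b) l * 6144)) =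
      6144 * 6144 * ∑ k, ∑ l, cov S k l * (Gco (gv a) k * Gco (hv b) l) := by
    simp_rw [Finset.mul_sum]
    refine Finset.sum_congr rfl fun k _ => Finset.sum_congr rfl fun l _ => by ring
  rw [this, h, mul_zero]

lemma solve3 (p q r s : ℝ) (h0 : p + q + r + s = 0) (h1 : 110 * p - 42 * q - 54 * r - 14 * s = 0)
    (h2 : 160 * p - 96 * r - 64 * s = 0) (h3 : 174 * p + 54 * q - 54 * r - 174 * s = 0) :
    p = 0 ∧ q = 0 ∧ r = 0 ∧ s = 0 := by
  refine ⟨?_, ?_, ?_, ?_⟩ <;> linarith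


lemma cov_const (S : Finset (Equiv.Perm (Fin 4))) (hS : NoZero S) (k l : Fin 4) :
    4 * cov S k l = S.card := by
  have row : ∀ k, (cov S k 0 : ℝ) + cov S k 1 + cov S k 2 + cov S k 3 = S.card := fun k => by
    rw [← cov_row S k, Fin.sum_univ_four]; push_cast; ring
  have col : ∀ k, (cov S 0 k : ℝ) + cov S 1 k + cov S 2 k + cov S 3 k = S.card := fun k => by
    rw [← cov_col S k, Fin.sum_univ_four]; push_cast; ring
  let x : Fin 3 → Fin 4 → ℝ := fun b k => ∑ l, (cov S k l : ℝ) * (Gco (hv b) l * 6144)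
  have x0 : ∀ b k, x b k = 0 := by
    intro b
    have e : ∀ a, ∑ k, x b k * (Gco (gv a) k * 6144) = 0 := by
      intro a
      rw [← bilin_gh S hS a b]
      refine Finset.sum_congr rfl fun k _ => ?_
      rw [Finset.sum_mul]
      refine Finset.sum_congr rfl fun l _ => by ring
    have s0 : x b 0 + x b 1 + x b 2 + x b 3 = 0 := by
      have c0 := col 0
      have c1 := col 1
      have c2 := col 2
      have c3 := col 3
      have hs : Gco (hv b) 0 * 6144 + Gco (hv b) 1 * 6144 + Gco (hv b) 2 * 6144 +
          Gco (hv b) 3 * 6144 = 0 := by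
        rw [gco_hv, gco_hv, gco_hv, gco_hv]
        fin_cases b <;> simp <;> norm_num
      simp only [x, Fin.sum_univ_four]
      linear_combination (Gco (hv b) 0 * 6144) * c0 + (Gco (hv b) 1 * 6144) * c1 +
        (Gco (hv b) 2 * 6144) * c2 + (Gco (hv b) 3 * 6144) * c3 + (S.card : ℝ) * hs
    have e0 := e 0
    have e1 := e 1
    have e2 := e 2
    simp only [Fin.sum_univ_four, gco_gv] at e0 e1 e2
    simp at e0 e1 e2
    obtain ⟨p0, p1, p2, p3⟩ := solve3 (x b 0) (x b 1) (x b 2) (x b 3) s0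
      (by linarith) (by linarith) (by linarith)
    intro k
    fin_cases k
    exacts [p0, p1, p2, p3]
  have y0 := x0 0 k
  have y1 := x0 1 k
  have y2 := x0 2 k
  simp only [x, Fin.sum_univ_four, gco_hv] at y0 y1 y2
  simp at y0 y1 y2
  have rk := row k
  obtain ⟨p3, p2, p1, p0⟩ := solve3 (cov S k 3 - S.card / 4) (cov S k 2 - S.card / 4)
    (cov S k 1 - S.card / 4) (cov S k 0 - S.card / 4) (by linarith)
      (by linarith) (by linarith) (by linarith)
  have : (4 * cov S k l : ℝ) = S.card := by
    fin_cases l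
    · simp only [Fin.zero_eta, Fin.mk_one, Fin.reduceFinMk]; linarith
    · simp only [Fin.zero_eta, Fin.mk_one, Fin.reduceFinMk]; linarith
    · simp only [Fin.zero_eta, Fin.mk_one, Fin.reduceFinMk]; linarith
    · simp only [Fin.zero_eta, Fin.mk_one, Fin.reduceFinMk]; linarith
  exact_mod_cast this

/-- All `4`-permutations in lexicographic order. -/
noncomputable def perms4 : List (Equiv.Perm (Fin 4)) := [
  mk4 0 1 2 3, mk4 0 1 3 2, mk4 0 2 1 3, mk4 0 2 3 1,
  mk4 0 3 1 2, mk4 0 3 2 1, mk4 1 0 2 3, mk4 1 0 3 2,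
  mk4 1 2 0 3, mk4 1 2 3 0, mk4 1 3 0 2, mk4 1 3 2 0,
  mk4 2 0 1 3, mk4 2 0 3 1, mk4 2 1 0 3, mk4 2 1 3 0,
  mk4 2 3 0 1, mk4 2 3 1 0, mk4 3 0 1 2, mk4 3 0 2 1,
  mk4 3 1 0 2, mk4 3 1 2 0, mk4 3 2 0 1, mk4 3 2 1 0]

/-- Positions of the values in each permutation. -/
def invs4 : List (ℕ × ℕ × ℕ × ℕ) := [
  (0, 1, 2, 3), (0, 1, 3, 2), (0, 2, 1, 3), (0, 3, 1, 2),
  (0, 2, 3, 1), (0, 3, 2, 1), (1, 0, 2, 3), (1, 0, 3, 2),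
  (2, 0, 1, 3), (3, 0, 1, 2), (2, 0, 3, 1), (3, 0, 2, 1),
  (1, 2, 0, 3), (1, 3, 0, 2), (2, 1, 0, 3), (3, 1, 0, 2),
  (2, 3, 0, 1), (3, 2, 0, 1), (1, 2, 3, 0), (1, 3, 2, 0),
  (2, 1, 3, 0), (3, 1, 2, 0), (2, 3, 1, 0), (3, 2, 1, 0)]

/-- Packed permutation matrices, in reverse order. -/
def codes4 : List ℕ := [
  1152956690052710400, 36893489248004505600, 1154047404547276800,
  1180591621816956518400, 36894614047327027200, 1180591655901784473600,
  1152956723338675200, 36893489281290470400, 1188950301659366400,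
  37778931864056706892800, 36929516944439116800, 37778931898141534848000,
  1154047438873428000, 1180591621851282669600, 1188950302699552800,
  37778931864057747079200, 1180627649514431316000, 37778932988857069600800,
  36894614081685684225, 1180591655936143130625, 36929516945511809025,
  37778931898142607540225, 1180627649514463821825, 37778932988857102106625]

/-- The test permutations. -/
def tests4 : List (List ℕ) := [
  [0, 1],
  [1, 5, 2, 3, 0, 4],
  [0, 4, 3, 2, 1, 5],
  [4, 0, 2, 3, 5, 1],
  [0, 2, 4, 1, 3, 5],
  [3, 2, 1, 0],
  [3, 0, 4, 5, 2, 1],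
  [4, 3, 0, 1, 5, 2],
  [1, 5, 4, 0, 2, 3],
  [2, 3, 5, 1, 0, 4],
  [0, 3, 4, 1, 2, 5],
  [2, 1, 0, 5, 4, 3],
  [0, 2, 1, 3],
  [2, 3, 5, 0, 4, 1],
  [0, 8, 6, 3, 2, 7, 1, 5, 4],
  [8, 2, 4, 5, 0, 1, 6, 3, 7],
  [4, 3, 7, 1, 6, 5, 2, 0, 8],
  [7, 3, 6, 1, 0, 5, 4, 2, 8],
  [5, 7, 9, 1, 3, 8, 6, 4, 2, 0],
  [7, 0, 6, 1, 5, 2, 9, 3, 8, 4],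
  [3, 9, 2, 5, 1, 6, 0, 7, 4, 8],
  [2, 0, 8, 6, 4, 9, 1, 3, 5, 7],
  [3, 4, 7, 12, 11, 2, 6, 10, 1, 0, 5, 8, 9]]

/-- For every test permutation, its order to the fourth power and the weighted counts. -/
def tabs4 : List (ℕ × List ℕ) := [
  (16,
    [70, 54, 34, 18, 18, 18, 54, 38, 18, 2, 2, 2, 18, 2, 18, 2, 2, 2, 2, 2, 2, 2, 2, 2]),
  (1296,
    [2854, 1430, 838, 566, 2294, 998, 1430, 1158, 2294, 1846, 582, 1846, 566, 6, 998, 694, 1410, 1234, 1846, 694, 1846, 1094, 1234, 1346]),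
  (1296,
    [2346, 1914, 4326, 1014, 1014, 4182, 1914, 2058, 1014, 102, 6, 102, 1014, 6, 4182, 102, 222, 894, 102, 102, 102, 774, 894, 2718]),
  (1296,
    [2854, 1430, 838, 2294, 566, 998, 1430, 1158, 566, 1846, 6, 694, 2294, 582, 998, 1846, 1410, 1234, 1846, 1846, 694, 1094, 1234, 1346]),
  (1296,
    [6870, 3222, 4710, 1350, 1350, 1350, 3222, 1590, 1350, 342, 582, 198, 1350, 6, 1350, 198, 402, 306, 342, 198, 198, 102, 306, 210]),
  (256,
    [4, 4, 4, 4, 4, 4, 4, 4, 4, 100, 4, 100, 4, 4, 4, 100, 220, 892, 100, 100, 100, 772, 892, 2716]),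
  (1296,
    [1346, 1378, 518, 1990, 838, 2710, 1522, 1266, 406, 3014, 6, 998, 406, 2310, 694, 998, 1446, 3446, 710, 998, 422, 694, 1142, 1846]),
  (1296,
    [1346, 1522, 518, 406, 406, 694, 1378, 1266, 838, 710, 6, 422, 1990, 2310, 2710, 998, 1446, 1142, 3014, 998, 998, 694, 3446, 1846]),
  (1296,
    [1346, 1378, 518, 838, 1990, 2710, 1522, 1266, 406, 710, 2310, 998, 406, 6, 694, 422, 1446, 1142, 3014, 998, 998, 694, 3446, 1846]),
  (1296,
    [1346, 1522, 518, 406, 406, 694, 1378, 1266, 1990, 3014, 2310, 998, 838, 6, 2710, 998, 1446, 3446, 710, 422, 998, 694, 1142, 1846]),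
  (1296,
    [5362, 2306, 3814, 1910, 1910, 1334, 2306, 1554, 1910, 646, 6, 358, 1910, 6, 1334, 358, 1302, 502, 646, 358, 358, 134, 502, 278]),
  (1296,
    [618, 1770, 294, 1446, 1446, 4470, 1770, 8106, 1446, 102, 6, 102, 1446, 6, 4470, 102, 222, 606, 102, 102, 102, 486, 606, 1278]),
  (256,
    [1208, 696, 1028, 228, 228, 372, 696, 472, 228, 20, 4, 20, 228, 4, 372, 20, 40, 56, 20, 20, 20, 36, 56, 72]),
  (1296,
    [1346, 1666, 518, 550, 550, 982, 946, 978, 982, 4166, 1158, 2438, 406, 1158, 694, 1286, 3750, 1718, 1286, 1286, 710, 406, 1142, 982]),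
  (6561,
    [5053, 9965, 7033, 6905, 13817, 19289, 3485, 8541, 1577, 1753, 2313, 1033, 1577, 2313, 4601, 2761, 5013, 4885, 5209, 9097, 11401, 6089, 10645, 13109]),
  (6561,
    [13109, 4885, 6089, 2761, 1033, 1753, 10645, 5013, 11401, 4601, 2313, 1577, 9097, 2313, 5209, 1577, 8541, 3485, 19289, 6905, 13817, 7033, 9965, 5053]),
  (6561,
    [5053, 3485, 7033, 1577, 1577, 4601, 9965, 8541, 13817, 5209, 2313, 11401, 6905, 2313, 19289, 9097, 5013, 10645, 1753, 2761, 1033, 6089, 4885, 13109]),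
  (6561,
    [5053, 3485, 7033, 1577, 1577, 4601, 9965, 8541, 6905, 1753, 2313, 2761, 13817, 2313, 19289, 1033, 5013, 4885, 5209, 11401, 9097, 6089, 10645, 13109]),
  (10000,
    [3122, 5922, 1178, 5274, 2394, 8010, 2322, 4690, 2250, 17498, 4618, 22538, 2826, 6346, 1962, 11018, 17110, 33302, 9146, 12890, 3098, 20442, 9830, 32214]),
  (10000,
    [19922, 21090, 12074, 9498, 15258, 11658, 8130, 13042, 3450, 2906, 1738, 3338, 16122, 12106, 13962, 6794, 7318, 4022, 16730, 12554, 3914, 2346, 13814, 8214]),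
  (10000,
    [17838, 6782, 9450, 6458, 6458, 6170, 24350, 13294, 17114, 6090, 10954, 4074, 6746, 2314, 18266, 5802, 6490, 7962, 16458, 6954, 15594, 7274, 7962, 9146]),
  (10000,
    [17686, 13078, 15562, 13546, 23338, 16858, 16246, 15958, 5194, 5770, 9226, 3898, 8650, 4618, 8218, 6202, 11314, 3970, 12106, 3322, 9082, 1738, 8578, 5842]),
  (28561,
    [34201, 39193, 16957, 15181, 29005, 34909, 39193, 22441, 29005, 34909, 64525, 29005, 15181, 589, 34909, 15181, 22441, 39193, 34909, 15181, 29005, 16957, 39193, 34201])]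

/-- Indicator vectors of the exceptional sets. -/
def exc4 : List (List Bool) := [
  [true, true, false, false, false, false, true, true, false, false, false, false, false, false, false, false, true, true, false, false, false, false, true, true],
  [false, false, true, true, false, false, false, false, false, false, true, true, true, true, false, false, false, false, false, false, true, true, false, false],
  [false, false, true, false, true, false, false, false, true, false, true, false, false, true, false, true, false, false, false, true, false, true, false, false],
  [true, false, false, false, false, true, false, true, false, true, false, false, false, false, true, false, true, false, true, false, false, false, false, true],
  [false, false, true, true, true, false, false, false, true, false, true, true, true, true, false, true, false, false, false, true, true, true, false, false],
  [true, true, false, false, false, true, true, true, false, true, false, false, false, false, true, false, true, true, true, false, false, false, true, true],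
  [false, true, true, true, true, false, true, false, true, false, true, true, true, true, false, true, false, true, false, true, true, true, true, false],
  [true, true, false, true, false, true, true, true, false, true, false, true, true, false, true, false, true, true, true, false, true, false, true, true],
  [true, true, false, false, true, true, true, true, true, true, false, false, false, false, true, true, true, true, true, true, false, false, true, true],
  [false, false, true, true, true, true, false, false, true, true, true, true, true, true, true, true, false, false, true, true, true, true, false, false]]

/-- Whether the `n` lowest base-32 digits are at most `k`. -/
def okd (k n : ℕ) : ℕ → Bool :=
  Nat.rec (fun _ => true) (fun _ ih a => bif Nat.ble (a % 32) k then ih (a / 32) else false) n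

/-- Search over all sets with constant cover matrix. -/
def srch (k k' : ℕ) (leaf : List Bool → Bool) (cs : List ℕ) : ℕ → ℕ → List Bool → Bool :=
  List.rec (fun _ _ l => leaf l) (fun c _ ih a b l =>
    (bif okd k 16 (a + c) then ih (a + c) b (true :: l) else true) &&
    (bif okd k' 16 (b + c) then ih a (b + c) (false :: l) else true)) cs

/-- Sum of the selected entries. -/
def dotN (l : List Bool) : List ℕ → ℕ :=
  List.rec (fun _ => 0) (fun b _ ih T =>
    List.rec 0 (fun x xs _ => bif b then x + ih xs else ih xs) T) l

/-- Number of selected indices. -/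
def cntB (l : List Bool) : ℕ := List.rec 0 (fun b _ ih => bif b then ih + 1 else ih) l

/-- Either both signs occur or the set is exceptional. -/
def leaf4 (l : List Bool) : Bool :=
  ((tabs4.any fun x => Nat.ble (cntB l * x.1) (dotN l x.2)) &&
    (tabs4.any fun x => Nat.ble (dotN l x.2) (cntB l * x.1))) || exc4.any (fun e => decide (e = l))

lemma srch_all : ∀ k : Fin 7, srch k (6 - k) leaf4 codes4 0 0 [] = true := by decide +kernel

/-- Apply a function to a quadruple. -/
def withQ (x : ℕ × ℕ × ℕ × ℕ) (f : ℕ → ℕ → ℕ → ℕ → ℕ) : ℕ :=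
  Prod.rec (fun a y => Prod.rec (fun b z => Prod.rec (fun c d => f a b c d) z) y) x

lemma tabs_ok : tests4.map (fun l => (l.length ^ 4, invs4.map fun x => withQ x (cntN l l.length))) =
    tabs4 := by decide +kernel

/-- Base-32 packing of the first `n` values. -/
def packN (n : ℕ) : (ℕ → ℕ) → ℕ :=
  Nat.rec (fun _ => 0) (fun _ ih d => d 0 + 32 * ih (fun j => d (j + 1))) n

lemma packN_succ (n : ℕ) (d : ℕ → ℕ) :
    packN (n + 1) d = d 0 + 32 * packN n (fun j => d (j + 1)) := rfl

lemma packN_add (n : ℕ) (d e : ℕ → ℕ) :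
    packN n (fun j => d j + e j) = packN n d + packN n e := by
  induction n generalizing d e with
  | zero => rfl
  | succ n ih => rw [packN_succ, packN_succ, packN_succ, ih]; ring

lemma packN_zero (n : ℕ) : packN n (fun _ => 0) = 0 := by
  induction n with
  | zero => rfl
  | succ n ih => rw [packN_succ, ih]

lemma okd_succ (k n a : ℕ) :
    okd k (n + 1) a = bif Nat.ble (a % 32) k then okd k n (a / 32) else false := rfl

lemma okd_pack (k : ℕ) (hk : k < 32) (n : ℕ) (d : ℕ → ℕ) (h : ∀ j < n, d j ≤ k) :
    okd k n (packN n d) = true := by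
  induction n generalizing d with
  | zero => rfl
  | succ n ih =>
    have h0 := h 0 (by omega)
    rw [okd_succ, packN_succ]
    have e1 : (d 0 + 32 * packN n fun j => d (j + 1)) % 32 = d 0 := by omega
    have e2 : (d 0 + 32 * packN n fun j => d (j + 1)) / 32 = packN n fun j => d (j + 1) := by omega
    rw [e1, e2, ih _ (fun j hj => h (j + 1) (by omega)), Nat.ble_eq_true_of_le h0]
    rfl

/-- Entries of the permutation matrix, listed row by row. -/
def dgt (π : Equiv.Perm (Fin 4)) (j : ℕ) : ℕ :=
  if ((π (Fin.ofNat 4 (j / 4)) : Fin 4) : ℕ) = j % 4 then 1 else 0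

lemma srch_cons (k k' : ℕ) (leaf : List Bool → Bool) (c : ℕ) (cs : List ℕ) (a b : ℕ)
    (l : List Bool) : srch k k' leaf (c :: cs) a b l =
    ((bif okd k 16 (a + c) then srch k k' leaf cs (a + c) b (true :: l) else true) &&
    (bif okd k' 16 (b + c) then srch k k' leaf cs a (b + c) (false :: l) else true)) := rfl

lemma srch_sound (S : Finset (Equiv.Perm (Fin 4))) (k k' : ℕ) (hk : k < 32) (hk' : k' < 32)
    (leaf : List Bool → Bool) (Q : List (Equiv.Perm (Fin 4))) (D E : ℕ → ℕ) (l : List Bool)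
    (hD : ∀ j < 16, D j + (Q.map fun π => if π ∈ S then dgt π j else 0).sum ≤ k)
    (hE : ∀ j < 16, E j + (Q.map fun π => if π ∈ S then 0 else dgt π j).sum ≤ k')
    (h : srch k k' leaf (Q.map fun π => packN 16 (dgt π)) (packN 16 D) (packN 16 E) l = true) :
    leaf ((Q.map fun π => decide (π ∈ S)).reverse ++ l) = true := by
  induction Q generalizing D E l with
  | nil => exact h
  | cons π Q ih =>
    rw [List.map_cons, srch_cons, Bool.and_eq_true, ← packN_add, ← packN_add] at h
    rw [List.map_cons, List.reverse_cons, List.append_assoc]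
    by_cases hπ : π ∈ S
    · simp only [List.map_cons, List.sum_cons, hπ, if_true] at hD hE
      have h1 := h.1
      rw [okd_pack k hk 16 _ (fun j hj => by have := hD j hj; omega)] at h1
      have := ih (fun j => D j + dgt π j) E (true :: l) (fun j hj => by have := hD j hj; omega)
        (fun j hj => by have := hE j hj; omega) h1
      simpa [hπ] using this
    · simp only [List.map_cons, List.sum_cons, hπ, if_false] at hD hE
      have h1 := h.2
      rw [okd_pack k' hk' 16 _ (fun j hj => by have := hE j hj; omega)] at h1
      have := ih D (fun j => E j + dgt π j) (false :: l) (fun j hj => by have := hD j hj; omega)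
        (fun j hj => by have := hE j hj; omega) h1
      simpa [hπ] using this

lemma perms4_nodup : perms4.Nodup := by decide +kernel
lemma perms4_complete : ∀ π : Equiv.Perm (Fin 4), π ∈ perms4 := by decide +kernel

lemma codes_ok : (perms4.reverse.map fun π => packN 16 (dgt π)) = codes4 := by decide +kernel

lemma sum_perms {M : Type*} [AddCommMonoid M] (F : Equiv.Perm (Fin 4) → M) :
    (perms4.map F).sum = ∑ π, F π := by
  rw [← List.sum_toFinset F perms4_nodup]
  congr 1
  ext π
  simp [perms4_complete π]

lemma sum_permsS {M : Type*} [AddCommMonoid M] (S : Finset (Equiv.Perm (Fin 4)))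
    (F : Equiv.Perm (Fin 4) → M) :
    (perms4.map fun π => if π ∈ S then F π else 0).sum = ∑ π ∈ S, F π := by
  rw [sum_perms]; simp

lemma dgt_total : ∀ j : Fin 16, (perms4.map fun π => dgt π j).sum = 6 := by decide +kernel

lemma dgt_cov (S : Finset (Equiv.Perm (Fin 4))) (j : ℕ) :
    ∑ π ∈ S, dgt π j = cov S (Fin.ofNat 4 (j / 4)) (Fin.ofNat 4 j) := by
  rw [cov, Finset.card_filter]
  refine Finset.sum_congr rfl fun π _ => ?_
  rw [dgt]
  refine if_congr ?_ rfl rfl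
  rw [Fin.ext_iff]
  rfl

/-- The indicator vector of a set of permutations. -/
noncomputable def chiL (S : Finset (Equiv.Perm (Fin 4))) : List Bool :=
  perms4.map fun π => decide (π ∈ S)

lemma leaf_of_cov (S : Finset (Equiv.Perm (Fin 4))) (k : ℕ) (hk : ∀ i j, cov S i j = k) :
    leaf4 (chiL S) = true := by
  have hD : ∀ j < 16, (perms4.map fun π => if π ∈ S then dgt π j else 0).sum = k := by
    intro j hj
    rw [sum_permsS, dgt_cov S j, hk]
  have hE : ∀ j < 16, (perms4.map fun π => if π ∈ S then dgt π j else 0).sum +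
      (perms4.map fun π => if π ∈ S then 0 else dgt π j).sum = 6 := by
    intro j hj
    rw [← dgt_total ⟨j, hj⟩, sum_perms, sum_perms, sum_perms, ← Finset.sum_add_distrib]
    refine Finset.sum_congr rfl fun π _ => ?_
    split_ifs <;> simp
  have hk6 : k ≤ 6 := by
    have a := hD 0 (by norm_num)
    have b := hE 0 (by norm_num)
    omega
  have h := srch_all ⟨k, by omega⟩
  rw [← codes_ok] at h
  have := srch_sound S k (6 - k) (by omega) (by omega) leaf4 perms4.reverse (fun _ => 0)
    (fun _ => 0) []
    (fun j hj => by
      rw [List.map_reverse, List.sum_reverse, hD j hj]; omega)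
    (fun j hj => by
      have a := hD j hj
      have b := hE j hj
      rw [List.map_reverse, List.sum_reverse]; omega)
    (by rw [packN_zero]; exact h)
  simpa [chiL] using this

lemma dot_eq (S : Finset (Equiv.Perm (Fin 4))) (F : Equiv.Perm (Fin 4) → ℕ) :
    dotN (chiL S) (perms4.map F) = ∑ π ∈ S, F π := by
  rw [← sum_permsS, chiL]
  generalize perms4 = Q
  induction Q with
  | nil => rfl
  | cons π Q ih =>
    rw [List.map_cons, List.map_cons, List.map_cons, List.sum_cons, ← ih]
    by_cases h : π ∈ S
    · rw [if_pos h, decide_eq_true h]; rfl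
    · rw [if_neg h, decide_eq_false h, zero_add]; rfl

lemma cntB_eq (S : Finset (Equiv.Perm (Fin 4))) : cntB (chiL S) = S.card := by
  rw [Finset.card_eq_sum_ones, ← sum_permsS, chiL]
  generalize perms4 = Q
  induction Q with
  | nil => rfl
  | cons π Q ih =>
    rw [List.map_cons, List.map_cons, List.sum_cons, ← ih]
    by_cases h : π ∈ S
    · rw [if_pos h, decide_eq_true h, add_comm]; rfl
    · rw [if_neg h, decide_eq_false h, zero_add]; rfl

lemma chiL_inj {S T : Finset (Equiv.Perm (Fin 4))} (h : chiL S = chiL T) : S = T := by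
  ext π
  have := List.map_inj_left.1 h π (perms4_complete π)
  simpa using this

/-- Position of the value `j`. -/
def posV (π : Equiv.Perm (Fin 4)) (j : Fin 4) : ℕ :=
  if π 0 = j then 0 else if π 1 = j then 1 else if π 2 = j then 2 else 3

lemma posV_eq (π : Equiv.Perm (Fin 4)) (j : Fin 4) : ((π.symm j : Fin 4) : ℕ) = posV π j := by
  obtain ⟨i, rfl⟩ := π.surjective j
  rw [Equiv.symm_apply_apply]
  unfold posV
  simp only [π.injective.eq_iff]
  revert i
  decide

lemma invs_ok : perms4.map (fun π => (posV π 0, posV π 1, posV π 2, posV π 3)) = invs4 := by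
  decide +kernel

/-- The count attached to a test permutation. -/
def cntP (l : List ℕ) (π : Equiv.Perm (Fin 4)) : ℕ :=
  cntN l l.length (posV π 0) (posV π 1) (posV π 2) (posV π 3)

lemma tabs_eq : tabs4 = tests4.map (fun l => (l.length ^ 4, perms4.map (cntP l))) := by
  rw [← tabs_ok, ← invs_ok]
  refine List.map_congr_left fun l _ => ?_
  rw [List.map_map]
  rfl

/-- Validity of a test permutation. -/
def validT (l : List ℕ) : Prop :=
  2 ≤ l.length ∧ l.length ≤ 16 ∧ (∀ x ∈ l, x < l.length) ∧ l.Nodup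

instance (l : List ℕ) : Decidable (validT l) := by unfold validT; infer_instance

lemma tests_valid : ∀ l ∈ tests4, validT l := by decide +kernel

lemma test_dev (S : Finset (Equiv.Perm (Fin 4))) (l : List ℕ) (hl : validT l) :
    ∃ ρ κ, Adm ρ ∧ OnTL ρ κ ∧ κ ≠ 1 ∧
      devS S ρ * (24 * (l.length : ℝ) ^ 4) =
        ((∑ π ∈ S, cntP l π : ℕ) : ℝ) - S.card * (l.length : ℝ) ^ 4 := by
  obtain ⟨h2, h16, hx, hnd⟩ := hl
  obtain ⟨m, hm⟩ : ∃ m, l.length = m + 1 := ⟨l.length - 1, by omega⟩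
  have hlt : ∀ i : Fin (m + 1), l.getD i 0 < m + 1 := by
    intro i
    have hi : (i : ℕ) < l.length := by omega
    rw [List.getD_eq_getElem _ _ hi]
    exact lt_of_lt_of_eq (hx _ (List.getElem_mem hi)) hm
  let f : Fin (m + 1) → Fin (m + 1) := fun i => ⟨l.getD i 0, hlt i⟩
  have hf : Function.Injective f := by
    intro i j hij
    have hi : (i : ℕ) < l.length := by omega
    have hj : (j : ℕ) < l.length := by omega
    have := Fin.ext_iff.1 hij
    simp only [f] at this
    rw [List.getD_eq_getElem _ _ hi, List.getD_eq_getElem _ _ hj] at this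
    exact Fin.ext ((hnd.getElem_inj_iff).1 this)
  refine ⟨stepD (m + 1) (permB f), permB f 0 (Fin.last m), adm_permB f hf,
    step_TL m (by omega) _, ?_, ?_⟩
  · unfold permB
    split_ifs
    · push_cast
      have : (1:ℝ) ≤ m := by exact_mod_cast (by omega : 1 ≤ m)
      linarith
    · norm_num
  · rw [devS, sub_mul, Finset.sum_mul, hm]
    push_cast
    congr 1
    · refine Finset.sum_congr rfl fun π _ => ?_
      have := perm_density_cnt (m + 1) f hf l (fun i => rfl) π
      simp only [posV_eq] at this
      push_cast at this
      rw [this, cntP, hm]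
    · ring

lemma leaf_exc (S : Finset (Equiv.Perm (Fin 4))) (hS : NoZero S) : chiL S ∈ exc4 := by
  have hc : ∀ i j, cov S i j = cov S 0 0 := fun i j => by
    have a := cov_const S hS i j
    have b := cov_const S hS 0 0
    omega
  have h := leaf_of_cov S _ hc
  rw [leaf4, Bool.or_eq_true] at h
  rcases h with h | h
  · exfalso
    rw [Bool.and_eq_true, List.any_eq_true, List.any_eq_true] at h
    obtain ⟨⟨x, hx, hge⟩, ⟨y, hy, hle⟩⟩ := h
    rw [tabs_eq, List.mem_map] at hx hy
    obtain ⟨l, hl, rfl⟩ := hx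
    obtain ⟨l', hl', rfl⟩ := hy
    rw [Nat.ble_eq, dot_eq, cntB_eq] at hge hle
    obtain ⟨ρ, κ, a1, a2, a3, a4⟩ := test_dev S l (tests_valid l hl)
    obtain ⟨ρ', κ', b1, b2, b3, b4⟩ := test_dev S l' (tests_valid l' hl')
    have hp : (0:ℝ) < 24 * (l.length : ℝ) ^ 4 := by
      have : 0 < l.length := by have := (tests_valid l hl).1; omega
      positivity
    have hp' : (0:ℝ) < 24 * (l'.length : ℝ) ^ 4 := by
      have : 0 < l'.length := by have := (tests_valid l' hl').1; omega
      positivity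
    have hge' : (S.card : ℝ) * (l.length : ℝ) ^ 4 ≤ ((∑ π ∈ S, cntP l π : ℕ) : ℝ) := by
      exact_mod_cast hge
    have hle' : ((∑ π ∈ S, cntP l' π : ℕ) : ℝ) ≤ (S.card : ℝ) * (l'.length : ℝ) ^ 4 := by
      exact_mod_cast hle
    rcases all_sign S hS with H | H
    · have := mul_pos (H ρ' κ' b1 b2 b3) hp'
      linarith
    · have := mul_neg_of_neg_of_pos (H ρ κ a1 a2 a3) hp
      linarith
  · rw [List.any_eq_true] at h
    obtain ⟨e, he, h⟩ := h
    rw [decide_eq_true_eq] at h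
    exact h ▸ he

theorem statement_18 (S : Finset (Equiv.Perm (Fin 4)))
    (h : ¬ (S = ({
        mk4 0 1 2 3,
        mk4 0 1 3 2,
        mk4 1 0 2 3,
        mk4 1 0 3 2,
        mk4 2 3 0 1,
        mk4 2 3 1 0,
        mk4 3 2 0 1,
        mk4 3 2 1 0} : Finset (Equiv.Perm (Fin 4))) ∨
      S = ({
        mk4 0 1 2 3,
        mk4 0 3 2 1,
        mk4 1 0 3 2,
        mk4 1 2 3 0,
        mk4 2 1 0 3,
        mk4 2 3 0 1,
        mk4 3 0 1 2,
        mk4 3 2 1 0} : Finset (Equiv.Perm (Fin 4))) ∨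
      S = ({
        mk4 0 2 1 3,
        mk4 0 2 3 1,
        mk4 1 3 0 2,
        mk4 1 3 2 0,
        mk4 2 0 1 3,
        mk4 2 0 3 1,
        mk4 3 1 0 2,
        mk4 3 1 2 0} : Finset (Equiv.Perm (Fin 4))) ∨
      S = ({
        mk4 0 2 1 3,
        mk4 0 3 1 2,
        mk4 1 2 0 3,
        mk4 1 3 0 2,
        mk4 2 0 3 1,
        mk4 2 1 3 0,
        mk4 3 0 2 1,
        mk4 3 1 2 0} : Finset (Equiv.Perm (Fin 4))) ∨
      S = ({
        mk4 0 1 2 3,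
        mk4 0 1 3 2,
        mk4 0 3 2 1,
        mk4 1 0 2 3,
        mk4 1 0 3 2,
        mk4 1 2 3 0,
        mk4 2 1 0 3,
        mk4 2 3 0 1,
        mk4 2 3 1 0,
        mk4 3 0 1 2,
        mk4 3 2 0 1,
        mk4 3 2 1 0} : Finset (Equiv.Perm (Fin 4))) ∨
      S = Finset.univ \ ({
        mk4 0 1 2 3,
        mk4 0 1 3 2,
        mk4 1 0 2 3,
        mk4 1 0 3 2,
        mk4 2 3 0 1,
        mk4 2 3 1 0,
        mk4 3 2 0 1,
        mk4 3 2 1 0} : Finset (Equiv.Perm (Fin 4))) ∨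
      S = Finset.univ \ ({
        mk4 0 1 2 3,
        mk4 0 3 2 1,
        mk4 1 0 3 2,
        mk4 1 2 3 0,
        mk4 2 1 0 3,
        mk4 2 3 0 1,
        mk4 3 0 1 2,
        mk4 3 2 1 0} : Finset (Equiv.Perm (Fin 4))) ∨
      S = Finset.univ \ ({
        mk4 0 2 1 3,
        mk4 0 2 3 1,
        mk4 1 3 0 2,
        mk4 1 3 2 0,
        mk4 2 0 1 3,
        mk4 2 0 3 1,
        mk4 3 1 0 2,
        mk4 3 1 2 0} : Finset (Equiv.Perm (Fin 4))) ∨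
      S = Finset.univ \ ({
        mk4 0 2 1 3,
        mk4 0 3 1 2,
        mk4 1 2 0 3,
        mk4 1 3 0 2,
        mk4 2 0 3 1,
        mk4 2 1 3 0,
        mk4 3 0 2 1,
        mk4 3 1 2 0} : Finset (Equiv.Perm (Fin 4))) ∨
      S = Finset.univ \ ({
        mk4 0 1 2 3,
        mk4 0 1 3 2,
        mk4 0 3 2 1,
        mk4 1 0 2 3,
        mk4 1 0 3 2,
        mk4 1 2 3 0,
        mk4 2 1 0 3,
        mk4 2 3 0 1,
        mk4 2 3 1 0,
        mk4 3 0 1 2,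
        mk4 3 2 0 1,
        mk4 3 2 1 0} : Finset (Equiv.Perm (Fin 4))))) :
    ∃ μ : Measure (ℝ × ℝ), IsPermuton μ ∧ μ ≠ uniformPermuton ∧
      ∑ π ∈ S, PermutonDensity π μ = (S.card : ℝ) / 24 := by
  by_contra hne
  have hS : NoZero S := by
    intro μ h1 h2 h3
    exact hne ⟨μ, h1, h2, h3⟩
  have hmem := leaf_exc S hS
  simp only [exc4, List.mem_cons, List.not_mem_nil, or_false] at hmem
  apply h
  rcases hmem with e | e | e | e | e | e | e | e | e | e
  · exact Or.inl (chiL_inj (e.trans (by decide +kernel)))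
  · exact Or.inr (Or.inr (Or.inl (chiL_inj (e.trans (by decide +kernel)))))
  · exact Or.inr (Or.inr (Or.inr (Or.inl (chiL_inj (e.trans (by decide +kernel))))))
  · exact Or.inr (Or.inl (chiL_inj (e.trans (by decide +kernel))))
  · exact Or.inr (Or.inr (Or.inr (Or.inr (Or.inr (Or.inr (Or.inr (Or.inr (Or.inr ((chiL_inj (e.trans (by decide +kernel))))))))))))
  · exact Or.inr (Or.inr (Or.inr (Or.inr (Or.inl (chiL_inj (e.trans (by decide +kernel)))))))
  · exact Or.inr (Or.inr (Or.inr (Or.inr (Or.inr (Or.inr (Or.inl (chiL_inj (e.trans (by decide +kernel)))))))))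
  · exact Or.inr (Or.inr (Or.inr (Or.inr (Or.inr (Or.inr (Or.inr (Or.inr (Or.inl (chiL_inj (e.trans (by decide +kernel)))))))))))
  · exact Or.inr (Or.inr (Or.inr (Or.inr (Or.inr (Or.inr (Or.inr (Or.inl (chiL_inj (e.trans (by decide +kernel))))))))))
  · exact Or.inr (Or.inr (Or.inr (Or.inr (Or.inr (Or.inl (chiL_inj (e.trans (by decide +kernel))))))))
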